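/- arXiv:2406.02599 — 8 statements merged into one kernel-verified Lean document; each statement's English description precedes it below -/
import Mathlib

section
/- For every j with 1 ≤ j ≤ m−1 and every x ∈ [B_j, B_{j+1}), the quantization mechanism is unbiased: Σ_{i=1}^{m} p(x,i)·B_i = x. -/
/-!
The mechanism draws a lower bin `l ≤ j` with weight `q j l` and, independently, an upper bin
`r > j` with weight `q (m - j) (m + 1 - r)`, then rounds `x` to `B l` or `B r` with the
probabilities that have mean `x`. Conditionally on the pair `(l, r)` the output is thus unbiased,
and averaging over the pairs keeps it so.
-/

open Finset

/-- Output distribution of the quantization mechanism: for input `x ∈ [B j, B (j+1))`,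
`outProb m B q j x i` is the probability that the output is bin `B i`. -/
noncomputable def outProb (m : ℕ) (B : ℕ → ℝ) (q : ℕ → ℕ → ℝ) (j : ℕ) (x : ℝ) (i : ℕ) : ℝ :=
  if i ≤ j then
    q j i * ∑ r ∈ Finset.Icc (j + 1) m, q (m - j) (m - r + 1) * ((B r - x) / (B r - B i))
  else
    q (m - j) (m + 1 - i) * ∑ l ∈ Finset.Icc 1 j, q j l * ((x - B l) / (B i - B l))

section TwoPointRounding

variable {K : Type*} [Field K]

theorem two_point_rounding_mean {a b : K} (hab : a ≠ b) (x : K) :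
    (b - x) / (b - a) * a + (x - a) / (b - a) * b = x := by
  have hba : b - a ≠ 0 := sub_ne_zero.2 hab.symm
  field_simp
  ring

theorem sum_two_point_rounding_mean {ι κ : Type*} {s : Finset ι} {t : Finset κ}
    {a : ι → K} {b : κ → K} (hab : ∀ l ∈ s, ∀ r ∈ t, a l ≠ b r) (u : ι → K) (v : κ → K) (x : K) :
    ∑ l ∈ s, u l * (∑ r ∈ t, v r * ((b r - x) / (b r - a l))) * a l +
      ∑ r ∈ t, v r * (∑ l ∈ s, u l * ((x - a l) / (b r - a l))) * b r =
    (∑ l ∈ s, u l) * (∑ r ∈ t, v r) * x := by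
  have lower : ∑ l ∈ s, u l * (∑ r ∈ t, v r * ((b r - x) / (b r - a l))) * a l =
      ∑ l ∈ s, ∑ r ∈ t, u l * v r * ((b r - x) / (b r - a l) * a l) := by
    simp only [mul_sum, sum_mul, mul_assoc]
  have upper : ∑ r ∈ t, v r * (∑ l ∈ s, u l * ((x - a l) / (b r - a l))) * b r =
      ∑ l ∈ s, ∑ r ∈ t, u l * v r * ((x - a l) / (b r - a l) * b r) := by
    rw [sum_comm]
    simp only [mul_sum, sum_mul, mul_assoc, mul_left_comm]
  calc
    _ = ∑ l ∈ s, ∑ r ∈ t, u l * v r *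
          ((b r - x) / (b r - a l) * a l + (x - a l) / (b r - a l) * b r) := by
      simp only [lower, upper, mul_add, sum_add_distrib]
    _ = ∑ l ∈ s, ∑ r ∈ t, u l * v r * x :=
      sum_congr rfl fun l hl => sum_congr rfl fun r hr => by
        rw [two_point_rounding_mean (hab l hl r hr)]
    _ = (∑ l ∈ s, u l) * (∑ r ∈ t, v r) * x := by
      rw [sum_mul_sum]
      simp only [sum_mul]

end TwoPointRounding

section IntervalSums

variable {M : Type*} [AddCommMonoid M]

theorem sum_Icc_consecutive (f : ℕ → M) {a j m : ℕ} (haj : a ≤ j + 1) (hjm : j ≤ m) :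
    ∑ i ∈ Icc a j, f i + ∑ i ∈ Icc (j + 1) m, f i = ∑ i ∈ Icc a m, f i := by
  simpa only [Ico_add_one_right_eq_Icc] using
    sum_Ico_consecutive f haj (Nat.add_le_add_right hjm 1)

theorem sum_Icc_add_one_reflect (f : ℕ → M) (j m : ℕ) :
    ∑ r ∈ Icc (j + 1) m, f (m + 1 - r) = ∑ i ∈ Icc 1 (m - j), f i := by
  have reflected := sum_Ico_reflect f (j + 1) (m := m + 1) (n := m + 1) (by lia)
  rw [Nat.add_sub_add_right] at reflected
  rcases le_total j m with hjm | hmj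
  · simpa [← Ico_add_one_right_eq_Icc, Nat.sub_add_comm hjm] using reflected
  · rw [Icc_eq_empty (by lia), Icc_eq_empty (by lia), sum_empty, sum_empty]

end IntervalSums

section OutputDistribution

variable {m j i : ℕ} {B : ℕ → ℝ} {q : ℕ → ℕ → ℝ} {x : ℝ}

theorem outProb_of_le (hij : i ≤ j) :
    outProb m B q j x i =
      q j i * ∑ r ∈ Icc (j + 1) m, q (m - j) (m + 1 - r) * ((B r - x) / (B r - B i)) := by
  rw [outProb, if_pos hij]
  congr 1
  refine sum_congr rfl fun r hr => ?_
  rw [Nat.sub_add_comm (mem_Icc.1 hr).2]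

theorem outProb_of_lt (hji : j < i) :
    outProb m B q j x i =
      q (m - j) (m + 1 - i) * ∑ l ∈ Icc 1 j, q j l * ((x - B l) / (B i - B l)) :=
  if_neg hji.not_ge

theorem sum_outProb_mul (hjm : j ≤ m)
    (hB : ∀ l r, 1 ≤ l → l ≤ j → j < r → r ≤ m → B l ≠ B r) :
    ∑ i ∈ Icc 1 m, outProb m B q j x i * B i =
      (∑ i ∈ Icc 1 j, q j i) * (∑ i ∈ Icc 1 (m - j), q (m - j) i) * x := by
  have hB_ne (l : ℕ) (hl : l ∈ Icc 1 j) (r : ℕ) (hr : r ∈ Icc (j + 1) m) : B l ≠ B r := by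
    rw [mem_Icc] at hl hr
    exact hB l r hl.1 hl.2 hr.1 hr.2
  rw [← sum_Icc_consecutive _ (Nat.le_add_left 1 j) hjm, ← sum_Icc_add_one_reflect,
    ← sum_two_point_rounding_mean hB_ne]
  congr 1
  · exact sum_congr rfl fun l hl => by rw [outProb_of_le (mem_Icc.1 hl).2]
  · exact sum_congr rfl fun r hr => by rw [outProb_of_lt (mem_Icc.1 hr).1]

theorem quantization_unbiased_general (hjm : j ≤ m)
    (hB : ∀ l r, 1 ≤ l → l ≤ j → j < r → r ≤ m → B l ≠ B r)
    (hq_lower : ∑ i ∈ Icc 1 j, q j i = 1)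
    (hq_upper : ∑ i ∈ Icc 1 (m - j), q (m - j) i = 1) :
    ∑ i ∈ Icc 1 m, outProb m B q j x i * B i = x := by
  rw [sum_outProb_mul hjm hB, hq_lower, hq_upper, one_mul, one_mul]

end OutputDistribution

/-- The quantization mechanism is unbiased: for every `x ∈ [B j, B (j+1))`,
`Σ_{i=1}^m p(x,i) B_i = x`. -/
theorem quantization_unbiased
    (m : ℕ) (hm : 2 ≤ m)
    (B : ℕ → ℝ)
    (hB : ∀ i j : ℕ, 1 ≤ i → i < j → j ≤ m → B i < B j)
    (q : ℕ → ℕ → ℝ)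
    (hq_nonneg : ∀ n i : ℕ, 1 ≤ n → n ≤ m → 0 ≤ q n i)
    (hq_sum : ∀ n : ℕ, 1 ≤ n → n ≤ m → ∑ i ∈ Finset.Icc 1 n, q n i = 1)
    (j : ℕ) (hj1 : 1 ≤ j) (hj2 : j ≤ m - 1)
    (x : ℝ) (hx1 : B j ≤ x) (hx2 : x < B (j + 1)) :
    ∑ i ∈ Finset.Icc 1 m, outProb m B q j x i * B i = x := by
  exact quantization_unbiased_general (by lia)
    (fun l r hl hlj hjr hr => (hB l r hl (hlj.trans_lt hjr) hr).ne)
    (hq_sum j hj1 (by lia)) (hq_sum (m - j) (by lia) (by lia))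
end

section
/- For all indices 1 ≤ i ≤ j ≤ m−1 and every x ∈ [B_j, B_{j+1}), the output probability of the ERM mechanism with uniform bins satisfies p(x,i) ≥ (2e^{−γ}/(m²(m−1)))·(m−j−1)·(m−j). -/
/-!
On the first `n` bins the exponents of the ERM weights lie in `[-γ/2, 0]`, so every selection
probability satisfies `q_n(k) ≥ exp(-γ/2) / n`. Since `x < B_{j+1}` and no two bins are further
apart than the extreme ones, `(B_r - x) / (B_r - B_i) ≥ (B_r - B_{j+1}) / (B_m - B_1)`. Hence
`p(x,i) ≥ exp(-γ) / (j (m - j)) · ∑_{r > j} (B_r - B_{j+1}) / (B_m - B_1)`, whatever the spacing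
of the bins. For uniform bins the sum is `(m - j - 1)(m - j) / (2 (m - 1))`, and
`4 j (m - j) ≤ m²`.
-/

open Finset

/-- ERM selection distribution with parameter `γ`:
`q_j(i) = exp(γ(B i − B j)/(2(B j − B 1))) / Σ_{k=1}^j exp(γ(B k − B j)/(2(B j − B 1)))`.
(At `j = 1` this evaluates to `q_1(1) = 1`, since in Lean `0/0 = 0` and `exp 0 = 1`.) -/
noncomputable def qERM (γ : ℝ) (B : ℕ → ℝ) (j i : ℕ) : ℝ :=
  Real.exp (γ * (B i - B j) / (2 * (B j - B 1))) /
    ∑ k ∈ Finset.Icc 1 j, Real.exp (γ * (B k - B j) / (2 * (B j - B 1)))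

lemma qERM_exponent_mem_Icc {γ : ℝ} {B : ℕ → ℝ} {n k : ℕ} (hγ : 0 ≤ γ)
    (hB : MonotoneOn B (Set.Icc 1 n)) (hk : k ∈ Set.Icc 1 n) :
    γ * (B k - B n) / (2 * (B n - B 1)) ∈ Set.Icc (-γ / 2) 0 := by
  have hn : 1 ≤ n := hk.1.trans hk.2
  have h_first : B 1 ≤ B k := hB ⟨le_rfl, hn⟩ hk hk.1
  have h_last : B k ≤ B n := hB hk ⟨hn, le_rfl⟩ hk.2
  have h_ratio_nonneg : 0 ≤ (B n - B k) / (B n - B 1) :=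
    div_nonneg (by linarith) (by linarith)
  have h_ratio_le_one : (B n - B k) / (B n - B 1) ≤ 1 :=
    div_le_one_of_le₀ (by linarith) (by linarith)
  have h_exponent :
      γ * (B k - B n) / (2 * (B n - B 1)) = -(γ / 2 * ((B n - B k) / (B n - B 1))) := by
    rw [mul_comm 2, ← div_div]
    ring
  rw [h_exponent]
  constructor <;> nlinarith

lemma exp_neg_half_div_le_qERM {γ : ℝ} {B : ℕ → ℝ} {n k : ℕ} (hγ : 0 ≤ γ)
    (hB : MonotoneOn B (Set.Icc 1 n)) (hk : k ∈ Set.Icc 1 n) :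
    Real.exp (-γ / 2) / n ≤ qERM γ B n k := by
  refine div_le_div₀ (Real.exp_pos _).le
    (Real.exp_le_exp.2 (qERM_exponent_mem_Icc hγ hB hk).1) ?_ ?_
  · exact sum_pos (fun _ _ => Real.exp_pos _) ⟨k, mem_Icc.2 hk⟩
  · calc
      ∑ l ∈ Icc 1 n, Real.exp (γ * (B l - B n) / (2 * (B n - B 1)))
          ≤ ∑ _l ∈ Icc 1 n, (1 : ℝ) :=
        sum_le_sum fun l hl =>
          Real.exp_le_one_iff.2 (qERM_exponent_mem_Icc hγ hB (mem_Icc.1 hl)).2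
      _ = n := by simp

lemma gap_div_range_le {m i j r : ℕ} {B : ℕ → ℝ} {x : ℝ} (hB : StrictMonoOn B (Set.Icc 1 m))
    (hi : 1 ≤ i) (hij : i ≤ j) (hjr : j < r) (hrm : r ≤ m) (hx : x ≤ B (j + 1)) :
    (B r - B (j + 1)) / (B m - B 1) ≤ (B r - x) / (B r - B i) := by
  have hi_mem : i ∈ Set.Icc 1 m := ⟨hi, by omega⟩
  have hr_mem : r ∈ Set.Icc 1 m := ⟨by omega, hrm⟩
  have h_next : B (j + 1) ≤ B r := hB.monotoneOn ⟨by omega, by omega⟩ hr_mem hjr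
  have h_first : B 1 ≤ B i := hB.monotoneOn ⟨le_rfl, by omega⟩ hi_mem hi
  have h_last : B r ≤ B m := hB.monotoneOn hr_mem ⟨by omega, le_rfl⟩ hrm
  have h_lt : B i < B r := hB hi_mem hr_mem (by omega)
  exact div_le_div₀ (by linarith) (by linarith) (by linarith) (by linarith)

lemma mul_mul_sum_gap_le_outProb {m i j : ℕ} {B : ℕ → ℝ} {q : ℕ → ℕ → ℝ} {x α β : ℝ}
    (hB : StrictMonoOn B (Set.Icc 1 m)) (hi : 1 ≤ i) (hij : i ≤ j) (hj : j < m)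
    (hx : x ≤ B (j + 1)) (hα₀ : 0 ≤ α) (hα : α ≤ q j i)
    (hβ₀ : 0 ≤ β) (hβ : ∀ k ∈ Set.Icc 1 (m - j), β ≤ q (m - j) k) :
    α * β * ∑ r ∈ Icc (j + 1) m, (B r - B (j + 1)) / (B m - B 1) ≤ outProb m B q j x i := by
  have h_gap_nonneg : ∀ r ∈ Icc (j + 1) m, 0 ≤ (B r - B (j + 1)) / (B m - B 1) := by
    intro r hr
    obtain ⟨hjr, hrm⟩ := mem_Icc.1 hr
    exact div_nonneg
      (sub_nonneg.2 (hB.monotoneOn ⟨by omega, by omega⟩ ⟨by omega, hrm⟩ hjr))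
      (sub_nonneg.2 (hB.monotoneOn ⟨le_rfl, by omega⟩ ⟨by omega, le_rfl⟩ (by omega)))
  rw [outProb, if_pos hij, mul_assoc, mul_sum]
  refine mul_le_mul hα (sum_le_sum fun r hr => ?_)
    (sum_nonneg fun r hr => mul_nonneg hβ₀ (h_gap_nonneg r hr)) (hα₀.trans hα)
  obtain ⟨hjr, hrm⟩ := mem_Icc.1 hr
  have hβr : β ≤ q (m - j) (m - r + 1) := hβ _ ⟨by omega, by omega⟩
  exact mul_le_mul hβr (gap_div_range_le hB hi hij hjr hrm hx) (h_gap_nonneg r hr)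
    (hβ₀.trans hβr)

lemma sum_Icc_succ_sub {j m : ℕ} (hjm : j ≤ m) :
    ∑ r ∈ Icc (j + 1) m, ((r : ℝ) - j - 1) = ((m : ℝ) - j - 1) * (m - j) / 2 := by
  induction m, hjm using Nat.le_induction with
  | base => simp
  | succ n hn ih =>
    rw [sum_Icc_succ_top (by omega), ih]
    push_cast
    ring

lemma four_div_sq_le_one_div_mul_sub {s t : ℝ} (ht : 0 < t) (hts : t < s) :
    4 / s ^ 2 ≤ 1 / (t * (s - t)) := by
  rw [div_le_div_iff₀ (pow_pos (ht.trans hts) 2) (mul_pos ht (sub_pos.2 hts))]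
  nlinarith [sq_nonneg (s - 2 * t)]

/-- Uniform bins: `B 1, …, B m` is the arithmetic progression with first term `a` and step `h`, the
spacing for which the output bound becomes explicit. The index `0` is not a bin: `B 0` is free. -/
def UniformBins (m : ℕ) (B : ℕ → ℝ) (a h : ℝ) : Prop :=
  ∀ k : ℕ, 1 ≤ k → k ≤ m → B k = a + ((k : ℝ) - 1) * h

namespace UniformBins

variable {m j : ℕ} {B : ℕ → ℝ} {a h : ℝ}

lemma sub_eq (hB : UniformBins m B a h) {k l : ℕ} (hk : k ∈ Set.Icc 1 m)
    (hl : l ∈ Set.Icc 1 m) : B l - B k = ((l : ℝ) - k) * h := by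
  rw [hB k hk.1 hk.2, hB l hl.1 hl.2]
  ring

lemma strictMonoOn (hB : UniformBins m B a h) (hh : 0 < h) :
    StrictMonoOn B (Set.Icc 1 m) := by
  intro k hk l hl hkl
  rw [← sub_pos, hB.sub_eq hk hl]
  exact mul_pos (sub_pos.2 (Nat.cast_lt.2 hkl)) hh

lemma sum_gap_div_range (hB : UniformBins m B a h) (hh : h ≠ 0) (hj : j < m) :
    ∑ r ∈ Icc (j + 1) m, (B r - B (j + 1)) / (B m - B 1)
      = ((m : ℝ) - j - 1) * (m - j) / (2 * (m - 1)) := by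
  have h_term : ∀ r ∈ Icc (j + 1) m,
      (B r - B (j + 1)) / (B m - B 1) = ((r : ℝ) - j - 1) / (m - 1) := by
    intro r hr
    obtain ⟨hjr, hrm⟩ := mem_Icc.1 hr
    rw [hB.sub_eq ⟨by omega, hj⟩ ⟨by omega, hrm⟩, hB.sub_eq ⟨le_rfl, by omega⟩ ⟨by omega, le_rfl⟩,
      mul_div_mul_right _ _ hh]
    push_cast
    ring
  rw [sum_congr rfl h_term, ← sum_div, sum_Icc_succ_sub hj.le, div_div]

lemma two_mul_div_le_div_mul_sum_gap {t : ℝ} (hB : UniformBins m B a h) (hh : h ≠ 0) (hj₀ : 0 < j)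
    (hj : j < m) (ht : 0 ≤ t) :
    2 * t / ((m : ℝ) ^ 2 * (m - 1)) * (m - j - 1) * (m - j)
      ≤ t / (j * (m - j)) * ∑ r ∈ Icc (j + 1) m, (B r - B (j + 1)) / (B m - B 1) := by
  have hj₁ : (1 : ℝ) ≤ j := Nat.one_le_cast.2 hj₀
  have hjm : (j : ℝ) + 1 ≤ m := by exact_mod_cast hj
  rw [hB.sum_gap_div_range hh hj]
  set S : ℝ := ((m : ℝ) - j - 1) * (m - j) / (2 * (m - 1)) with hS
  have hS₀ : 0 ≤ S :=
    div_nonneg (mul_nonneg (by linarith) (by linarith)) (by linarith)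
  calc
    2 * t / ((m : ℝ) ^ 2 * (m - 1)) * (m - j - 1) * (m - j) = 4 / (m : ℝ) ^ 2 * (t * S) := by
      have hm : (m : ℝ) - 1 ≠ 0 := by linarith
      rw [hS]
      field_simp
      ring
    _ ≤ 1 / (j * ((m : ℝ) - j)) * (t * S) :=
      mul_le_mul_of_nonneg_right
        (four_div_sq_le_one_div_mul_sub (by linarith) (by linarith)) (mul_nonneg ht hS₀)
    _ = t / (j * ((m : ℝ) - j)) * S := by ring

end UniformBins

theorem erm_output_prob_lower_bound_general {m i j : ℕ} {B : ℕ → ℝ} {γ x : ℝ}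
    (hB : StrictMonoOn B (Set.Icc 1 m)) (hγ : 0 ≤ γ) (hi : 1 ≤ i) (hij : i ≤ j) (hj : j < m)
    (hx : x ∈ Set.Ico (B j) (B (j + 1))) :
    Real.exp (-γ) / (j * (m - j)) * ∑ r ∈ Icc (j + 1) m, (B r - B (j + 1)) / (B m - B 1)
      ≤ outProb m B (qERM γ B) j x i := by
  have h_selection : ∀ n ≤ m, ∀ k ∈ Set.Icc 1 n, Real.exp (-γ / 2) / n ≤ qERM γ B n k :=
    fun n hn k hk =>
      exp_neg_half_div_le_qERM hγ (hB.monotoneOn.mono (Set.Icc_subset_Icc_right hn)) hk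
  have h_exp : Real.exp (-γ) / (j * (m - j)) =
      Real.exp (-γ / 2) / j * (Real.exp (-γ / 2) / ↑(m - j)) := by
    rw [Nat.cast_sub hj.le, div_mul_div_comm, ← Real.exp_add, add_halves]
  rw [h_exp]
  exact mul_mul_sum_gap_le_outProb hB hi hij hj hx.2.le
    (by positivity) (h_selection j hj.le i ⟨hi, hij⟩)
    (by positivity) (h_selection (m - j) (Nat.sub_le m j))

/-- For all `1 ≤ i ≤ j ≤ m−1` and `x ∈ [B j, B (j+1))`, the output probability of the ERM
mechanism with uniform bins satisfies
`p(x,i) ≥ (2 e^{−γ}/(m²(m−1))) (m−j−1)(m−j)`. -/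
theorem erm_output_prob_lower_bound
    (m : ℕ) (hm : 2 ≤ m)
    (c Δ : ℝ) (hc : 0 < c) (hΔ : 0 ≤ Δ)
    (B : ℕ → ℝ)
    (hB : ∀ i : ℕ, 1 ≤ i → i ≤ m →
      B i = -c - Δ + ((i : ℝ) - 1) * ((2 * c + 2 * Δ) / ((m : ℝ) - 1)))
    (γ : ℝ) (hγ : 0 < γ)
    (i j : ℕ) (hi : 1 ≤ i) (hij : i ≤ j) (hj : j ≤ m - 1)
    (x : ℝ) (hx1 : B j ≤ x) (hx2 : x < B (j + 1)) :
    2 * Real.exp (-γ) / ((m : ℝ) ^ 2 * ((m : ℝ) - 1)) * ((m : ℝ) - (j : ℝ) - 1) * ((m : ℝ) - (j : ℝ))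
      ≤ outProb m B (qERM γ B) j x i := by
  have h_step : 0 < (2 * c + 2 * Δ) / ((m : ℝ) - 1) :=
    div_pos (by linarith) (sub_pos.2 (Nat.one_lt_cast.2 hm))
  have h_uniform : UniformBins m B (-c - Δ) ((2 * c + 2 * Δ) / ((m : ℝ) - 1)) := hB
  have hjm : j < m := by omega
  exact (h_uniform.two_mul_div_le_div_mul_sum_gap h_step.ne' (hi.trans hij) hjm
    (Real.exp_pos _).le).trans
    (erm_output_prob_lower_bound_general (h_uniform.strictMonoOn h_step) hγ.le hi hij hjm
      ⟨hx1, hx2⟩)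
end

section
/- On each interval between consecutive bins, each output probability is monotone: for every 1 ≤ k ≤ m−1 and all x, x' ∈ [B_k, B_{k+1}) with x ≤ x', one has p(x,i) ≥ p(x',i) for every i with 1 ≤ i ≤ k, and p(x,i) ≤ p(x',i) for every i with k+1 ≤ i ≤ m. -/
/-!
As a function of the input `x`, the probability of output `i` is a nonnegative weight times a
nonnegative combination of affine functions of `x`. Their slopes are `-1 / (B r - B i)` with
`i ≤ k < r` when bin `i` lies to the left of the input, and `1 / (B i - B l)` with `l ≤ k < i`
when it lies to the right, so the signs are determined by the order of the bins.
-/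

open Finset

section WeightedSum

variable {ι K : Type*} [Field K] [LinearOrder K] [IsStrictOrderedRing K]
  {s : Finset ι} {w d : ι → K}

lemma monotone_sum_mul_sub_div (hw : ∀ i ∈ s, 0 ≤ w i) (hd : ∀ i ∈ s, 0 ≤ d i) (b : ι → K) :
    Monotone fun x ↦ ∑ i ∈ s, w i * ((x - b i) / d i) := fun _ _ hxy ↦
  sum_le_sum fun i hi ↦ mul_le_mul_of_nonneg_left
    (div_le_div_of_nonneg_right (sub_le_sub_right hxy (b i)) (hd i hi)) (hw i hi)

lemma antitone_sum_mul_sub_div (hw : ∀ i ∈ s, 0 ≤ w i) (hd : ∀ i ∈ s, 0 ≤ d i) (b : ι → K) :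
    Antitone fun x ↦ ∑ i ∈ s, w i * ((b i - x) / d i) := fun _ _ hxy ↦
  sum_le_sum fun i hi ↦ mul_le_mul_of_nonneg_left
    (div_le_div_of_nonneg_right (sub_le_sub_left hxy (b i)) (hd i hi)) (hw i hi)

end WeightedSum

section OutProb

variable {m k i : ℕ} {B : ℕ → ℝ} {q : ℕ → ℕ → ℝ}

lemma outProb_antitone_of_mem_Icc (hB : StrictMonoOn B (Set.Icc 1 m)) (hqi : 0 ≤ q k i)
    (hq : ∀ n ∈ Icc 1 (m - k), 0 ≤ q (m - k) n) (hi : i ∈ Icc 1 k) :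
    Antitone fun x ↦ outProb m B q k x i := by
  obtain ⟨hi1, hik⟩ := mem_Icc.mp hi
  simp only [outProb, if_pos hik]
  refine (antitone_sum_mul_sub_div (fun r hr ↦ ?_) (fun r hr ↦ ?_) B).const_mul hqi
  all_goals obtain ⟨hkr, hrm⟩ := mem_Icc.mp hr
  · exact hq _ (mem_Icc.mpr (by omega))
  · have hir : B i < B r := hB ⟨hi1, by omega⟩ ⟨by omega, hrm⟩ (by omega)
    exact sub_nonneg.mpr hir.le

lemma outProb_monotone_of_mem_Icc (hB : StrictMonoOn B (Set.Icc 1 m))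
    (hqi : 0 ≤ q (m - k) (m + 1 - i)) (hq : ∀ n ∈ Icc 1 k, 0 ≤ q k n) (hi : i ∈ Icc (k + 1) m) :
    Monotone fun x ↦ outProb m B q k x i := by
  obtain ⟨hki, him⟩ := mem_Icc.mp hi
  simp only [outProb, if_neg (Nat.not_le.mpr hki)]
  refine (monotone_sum_mul_sub_div hq (fun l hl ↦ ?_) B).const_mul hqi
  obtain ⟨hl1, hlk⟩ := mem_Icc.mp hl
  have hli : B l < B i := hB ⟨hl1, by omega⟩ ⟨by omega, him⟩ (by omega)
  exact sub_nonneg.mpr hli.le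

theorem output_prob_monotone_general (hB : StrictMonoOn B (Set.Icc 1 m))
    (hq_left : ∀ n ∈ Icc 1 k, 0 ≤ q k n) (hq_right : ∀ n ∈ Icc 1 (m - k), 0 ≤ q (m - k) n) :
    (∀ i ∈ Icc 1 k, Antitone fun x ↦ outProb m B q k x i) ∧
    (∀ i ∈ Icc (k + 1) m, Monotone fun x ↦ outProb m B q k x i) := by
  refine ⟨fun i hi ↦ outProb_antitone_of_mem_Icc hB (hq_left i hi) hq_right hi,
    fun i hi ↦ outProb_monotone_of_mem_Icc hB (hq_right _ ?_) hq_left hi⟩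
  rw [mem_Icc] at hi ⊢
  omega

end OutProb

/-- On each interval between consecutive bins, each output probability is monotone:
for `x ≤ x'` in `[B k, B (k+1))`, `p(x,i) ≥ p(x',i)` for `1 ≤ i ≤ k` and
`p(x,i) ≤ p(x',i)` for `k+1 ≤ i ≤ m`. -/
theorem output_prob_monotone
    (m : ℕ) (hm : 2 ≤ m)
    (B : ℕ → ℝ)
    (hB : ∀ i j : ℕ, 1 ≤ i → i < j → j ≤ m → B i < B j)
    (q : ℕ → ℕ → ℝ)
    (hq_nonneg : ∀ n i : ℕ, 1 ≤ n → n ≤ m → 0 ≤ q n i)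
    (hq_sum : ∀ n : ℕ, 1 ≤ n → n ≤ m → ∑ i ∈ Finset.Icc 1 n, q n i = 1)
    (k : ℕ) (hk1 : 1 ≤ k) (hk2 : k ≤ m - 1)
    (x x' : ℝ) (hx1 : B k ≤ x) (hx2 : x < B (k + 1))
    (hx'1 : B k ≤ x') (hx'2 : x' < B (k + 1)) (hxx' : x ≤ x') :
    (∀ i : ℕ, 1 ≤ i → i ≤ k → outProb m B q k x' i ≤ outProb m B q k x i) ∧
    (∀ i : ℕ, k + 1 ≤ i → i ≤ m → outProb m B q k x i ≤ outProb m B q k x' i) := by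
  obtain ⟨hanti, hmono⟩ := output_prob_monotone_general (k := k) (q := q)
    (fun i hi j hj hij ↦ hB i j hi.1 hij hj.2)
    (fun n _ ↦ hq_nonneg k n hk1 (by omega)) (fun n _ ↦ hq_nonneg (m - k) n (by omega) (by omega))
  exact ⟨fun i hi1 hik ↦ hanti i (mem_Icc.mpr ⟨hi1, hik⟩) hxx',
    fun i hki him ↦ hmono i (mem_Icc.mpr ⟨hki, him⟩) hxx'⟩
end

section
/- The output distribution is symmetric around 0: for every 1 ≤ j ≤ m−1, every x strictly between B_j and B_{j+1} (i.e., x ∈ (B_j, B_{j+1})), and every i ∈ {1,…,m}, one has p(x,i) = p(−x, m+1−i). -/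
/-!
The reflection `r ↦ m + 1 - r` exchanges the bins above index `j` with the bins up to index
`m - j` and negates their values, so it carries the lower branch of `outProb` at `(j, x, i)`, term
by term, to the upper branch at `(m - j, -x, m + 1 - i)`. The reflection is an involution, so
the upper branch is the same identity read from the reflected side.
-/

open Finset

lemma sum_Icc_reflect {M : Type*} [AddCommMonoid M] (f : ℕ → M) {k m n : ℕ}
    (hk : k ≤ n) (hm : m ≤ n) :
    ∑ r ∈ Icc k m, f (n - r) = ∑ l ∈ Icc (n - m) (n - k), f l := by
  simpa [Nat.sub_add_comm hk, Ico_add_one_right_eq_Icc] using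
    sum_Ico_reflect f k (Nat.add_le_add_right hm 1)

lemma outProb_reflect_of_le {m : ℕ} {B : ℕ → ℝ}
    (hsym : ∀ i : ℕ, 1 ≤ i → i ≤ m → B i = -B (m + 1 - i))
    (q : ℕ → ℕ → ℝ) {j : ℕ} (hj : j ≤ m) (x : ℝ) {i : ℕ} (hi : 1 ≤ i) (hij : i ≤ j) :
    outProb m B q j x i = outProb m B q (m - j) (-x) (m + 1 - i) := by
  have h_reflected_upper : ¬ m + 1 - i ≤ m - j := by lia
  have hi_invol : m + 1 - (m + 1 - i) = i := Nat.sub_sub_self (by lia)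
  rw [outProb, outProb, if_pos hij, if_neg h_reflected_upper, hi_invol, Nat.sub_sub_self hj]
  congr 1
  let summand (l : ℕ) : ℝ := q (m - j) l * ((-x - B l) / (B (m + 1 - i) - B l))
  calc ∑ r ∈ Icc (j + 1) m, q (m - j) (m - r + 1) * ((B r - x) / (B r - B i))
    _ = ∑ r ∈ Icc (j + 1) m, summand (m + 1 - r) := by
      refine sum_congr rfl fun r hr => ?_
      obtain ⟨hjr, hrm⟩ := mem_Icc.mp hr
      rw [hsym r (by lia) hrm, hsym i hi (hij.trans hj), neg_sub_neg, neg_sub_comm,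
        ← Nat.sub_add_comm hrm]
    _ = ∑ l ∈ Icc 1 (m - j), summand l := by
      simpa using sum_Icc_reflect summand (Nat.add_le_add_right hj 1) m.le_succ

theorem output_prob_symmetric_general
    (m : ℕ) (B : ℕ → ℝ)
    (hB : ∀ i j : ℕ, 1 ≤ i → i < j → j ≤ m → B i < B j)
    (hsym : ∀ i : ℕ, 1 ≤ i → i ≤ m → B i = -B (m + 1 - i))
    (q : ℕ → ℕ → ℝ) (j : ℕ) (hj : j ≤ m) (x : ℝ) (i : ℕ) (hi1 : 1 ≤ i) (hi2 : i ≤ m) :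
    outProb m B q j x i = outProb m B q (m - j) (-x) (m + 1 - i) := by
  rcases le_or_gt i j with h_lower | h_upper
  · exact outProb_reflect_of_le hsym q hj x hi1 h_lower
  · have h_reflected := outProb_reflect_of_le hsym q (m.sub_le j) (-x)
      (i := m + 1 - i) (by lia) (by lia)
    rw [Nat.sub_sub_self hj, Nat.sub_sub_self (hi2.trans m.le_succ), neg_neg] at h_reflected
    exact h_reflected.symm

/-- With symmetric bins `B i = −B (m+1−i)`, the output distribution is symmetric around 0:
for every `x ∈ (B j, B (j+1))` and every `i ∈ {1,…,m}`, `p(x,i) = p(−x, m+1−i)`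
(where `−x` lies in the interval `(B (m−j), B (m+1−j))`). -/
theorem output_prob_symmetric
    (m : ℕ) (hm : 2 ≤ m)
    (B : ℕ → ℝ)
    (hB : ∀ i j : ℕ, 1 ≤ i → i < j → j ≤ m → B i < B j)
    (hsym : ∀ i : ℕ, 1 ≤ i → i ≤ m → B i = -B (m + 1 - i))
    (q : ℕ → ℕ → ℝ)
    (hq_nonneg : ∀ n i : ℕ, 1 ≤ n → n ≤ m → 0 ≤ q n i)
    (hq_sum : ∀ n : ℕ, 1 ≤ n → n ≤ m → ∑ i ∈ Finset.Icc 1 n, q n i = 1)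
    (j : ℕ) (hj1 : 1 ≤ j) (hj2 : j ≤ m - 1)
    (x : ℝ) (hx1 : B j < x) (hx2 : x < B (j + 1))
    (i : ℕ) (hi1 : 1 ≤ i) (hi2 : i ≤ m) :
    outProb m B q j x i = outProb m B q (m - j) (-x) (m + 1 - i) :=
  output_prob_symmetric_general m B hB hsym q j (hj2.trans (m.sub_le 1)) x i hi1 hi2
end

section
/- For every γ > 0 and every 1 ≤ j ≤ m, the expected distance of the ERM selection from the top bin satisfies Σ_{i=1}^{j} q_j(i)·(B_j − B_i) ≤ (2(B_j − B_1)/γ)·log j (with the convention that the right-hand side is 0 when j = 1). -/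
/-!
The ERM selection is a Gibbs distribution `q i = exp (-E i) / Z`, whose energies
`E i = γ (B j - B i) / (2 (B j - B 1))` are proportional to the distances to be averaged. Jensen's
inequality for `exp` bounds the mean energy: `exp (∑ q i * E i) ≤ ∑ q i * exp (E i) = j / Z`, and
`1 ≤ Z` because the top bin has energy `0`. Hence the mean energy is at most `log j`.
-/

open Finset

/-- The Gibbs distribution on the finite set `s` with energies `E`, at temperature one: the state
`i` has probability proportional to `exp (-E i)`. It is not truncated to zero outside `s`. -/
noncomputable def gibbsWeight {ι : Type*} (s : Finset ι) (E : ι → ℝ) (i : ι) : ℝ :=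
  Real.exp (-E i) / ∑ k ∈ s, Real.exp (-E k)

namespace gibbsWeight

variable {ι : Type*} (s : Finset ι) (E : ι → ℝ)

lemma nonneg (i : ι) : 0 ≤ gibbsWeight s E i := by
  unfold gibbsWeight
  positivity

lemma mul_exp (i : ι) :
    gibbsWeight s E i * Real.exp (E i) = (∑ k ∈ s, Real.exp (-E k))⁻¹ := by
  rw [gibbsWeight, div_mul_eq_mul_div, ← Real.exp_add, neg_add_cancel, Real.exp_zero, one_div]

variable {s}

lemma sum_eq_one (hs : s.Nonempty) : ∑ i ∈ s, gibbsWeight s E i = 1 := by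
  have partition_pos : 0 < ∑ k ∈ s, Real.exp (-E k) :=
    Finset.sum_pos (fun _ _ => Real.exp_pos _) hs
  simp only [gibbsWeight, ← Finset.sum_div, div_self partition_pos.ne']

lemma exp_sum_mul_le_card_div (hs : s.Nonempty) :
    Real.exp (∑ i ∈ s, gibbsWeight s E i * E i) ≤ #s / ∑ k ∈ s, Real.exp (-E k) :=
  calc Real.exp (∑ i ∈ s, gibbsWeight s E i * E i)
      ≤ ∑ i ∈ s, gibbsWeight s E i * Real.exp (E i) :=
        convexOn_exp.map_sum_le (fun i _ => nonneg s E i) (sum_eq_one E hs)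
          fun _ _ => Set.mem_univ _
    _ = #s / ∑ k ∈ s, Real.exp (-E k) := by
        simp only [mul_exp, Finset.sum_const, nsmul_eq_mul, div_eq_mul_inv]

variable {E}

lemma sum_mul_le_log_card (hE : ∃ i ∈ s, E i ≤ 0) :
    ∑ i ∈ s, gibbsWeight s E i * E i ≤ Real.log #s := by
  obtain ⟨a, ha, hEa⟩ := hE
  have hs : s.Nonempty := ⟨a, ha⟩
  have one_le_partition : 1 ≤ ∑ k ∈ s, Real.exp (-E k) :=
    (Real.one_le_exp (neg_nonneg.mpr hEa)).trans
      (Finset.single_le_sum (fun k _ => (Real.exp_pos (-E k)).le) ha)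
  rw [Real.le_log_iff_exp_le (by exact_mod_cast hs.card_pos)]
  exact (exp_sum_mul_le_card_div E hs).trans (div_le_self (Nat.cast_nonneg _) one_le_partition)

end gibbsWeight

/-- The energies for which the ERM selection distribution on the bins `1, …, j` is a Gibbs
distribution: the distance to the top bin, as a fraction of the range `B j - B 1`, times `γ / 2`.
At `j = 1`, where the range vanishes, the energy of the only bin is `0 / 0 = 0`. -/
noncomputable def ermEnergy (γ : ℝ) (B : ℕ → ℝ) (j i : ℕ) : ℝ :=
  γ * (B j - B i) / (2 * (B j - B 1))

lemma ermEnergy_self (γ : ℝ) (B : ℕ → ℝ) (j : ℕ) : ermEnergy γ B j j = 0 := by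
  simp [ermEnergy]

lemma qERM_eq_gibbsWeight (γ : ℝ) (B : ℕ → ℝ) (j i : ℕ) :
    qERM γ B j i = gibbsWeight (Finset.Icc 1 j) (ermEnergy γ B j) i := by
  have neg_ermEnergy (k : ℕ) :
      -ermEnergy γ B j k = γ * (B k - B j) / (2 * (B j - B 1)) := by
    unfold ermEnergy
    ring
  simp only [qERM, gibbsWeight, neg_ermEnergy]

lemma sum_qERM_mul_ermEnergy_le_log (γ : ℝ) (B : ℕ → ℝ) {j : ℕ} (hj : 1 ≤ j) :
    ∑ i ∈ Finset.Icc 1 j, qERM γ B j i * ermEnergy γ B j i ≤ Real.log j := by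
  simpa only [qERM_eq_gibbsWeight, Nat.card_Icc, Nat.add_sub_cancel] using
    gibbsWeight.sum_mul_le_log_card
      ⟨j, Finset.right_mem_Icc.mpr hj, (ermEnergy_self γ B j).le⟩

lemma sub_eq_mul_ermEnergy {γ : ℝ} (hγ : γ ≠ 0) {B : ℕ → ℝ} {j : ℕ} (hB : B 1 ≠ B j) (i : ℕ) :
    B j - B i = 2 * (B j - B 1) / γ * ermEnergy γ B j i := by
  have range_ne_zero : B j - B 1 ≠ 0 := sub_ne_zero.mpr hB.symm
  unfold ermEnergy
  field_simp

theorem erm_expected_distance_bound_general (B : ℕ → ℝ) {γ : ℝ} (hγ : 0 < γ) {j : ℕ}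
    (hj : 1 ≤ j) (hB : 1 < j → B 1 < B j) :
    ∑ i ∈ Finset.Icc 1 j, qERM γ B j i * (B j - B i) ≤
      2 * (B j - B 1) / γ * Real.log (j : ℝ) := by
  rcases hj.eq_or_lt with rfl | one_lt_j
  · simp
  have range_pos : 0 < B j - B 1 := sub_pos.mpr (hB one_lt_j)
  calc ∑ i ∈ Finset.Icc 1 j, qERM γ B j i * (B j - B i)
      = 2 * (B j - B 1) / γ * ∑ i ∈ Finset.Icc 1 j, qERM γ B j i * ermEnergy γ B j i := by
        rw [Finset.mul_sum]
        refine Finset.sum_congr rfl fun i _ => ?_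
        rw [sub_eq_mul_ermEnergy hγ.ne' (hB one_lt_j).ne i, mul_left_comm]
    _ ≤ 2 * (B j - B 1) / γ * Real.log (j : ℝ) :=
        mul_le_mul_of_nonneg_left (sum_qERM_mul_ermEnergy_le_log γ B hj) (by positivity)

/-- For every `γ > 0` and `1 ≤ j ≤ m`, the expected distance of the ERM selection from the
top bin satisfies `Σ_{i=1}^j q_j(i)(B j − B i) ≤ (2(B j − B 1)/γ) log j`
(the right-hand side is `0` when `j = 1`, since `log 1 = 0` and `B 1 − B 1 = 0`). -/
theorem erm_expected_distance_bound
    (m : ℕ) (hm : 2 ≤ m)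
    (B : ℕ → ℝ)
    (hB : ∀ i j : ℕ, 1 ≤ i → i < j → j ≤ m → B i < B j)
    (γ : ℝ) (hγ : 0 < γ)
    (j : ℕ) (hj1 : 1 ≤ j) (hj2 : j ≤ m) :
    ∑ i ∈ Finset.Icc 1 j, qERM γ B j i * (B j - B i) ≤
      2 * (B j - B 1) / γ * Real.log (j : ℝ) :=
  erm_expected_distance_bound_general B hγ hj1 fun hj => hB 1 j le_rfl hj hj2
end

section
/- (Theorem 3, uniform input) The mean absolute error against the uniform input distribution on [−c,c] satisfies ∫_{−c}^{c} ( Σ_{i=1}^{m} p(x,i)·|B_i − x| ) dx ≤ (B_s + c)·(ζ_{m−s+1} + (B_s − B_{s−1}) + ζ_{s−1}) + Σ_{n=s}^{t−1} (B_{n+1} − B_n)·(ζ_{m−n} + (B_{n+1} − B_n) + ζ_n) + (c − B_t)·(ζ_{m−t} + (B_{t+1} − B_t) + ζ_t). -/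
open Finset

/-- The index `j ∈ {1,…,m−1}` such that `x ∈ [B j, B (j+1))` (for increasing bins and
`x` in range): the largest `j ≤ m−1` with `B j ≤ x`. -/
noncomputable def binIdx (m : ℕ) (B : ℕ → ℝ) (x : ℝ) : ℕ :=
  ((Finset.Icc 1 (m - 1)).filter (fun j => B j ≤ x)).sup id

/-- The output distribution as a function of the input `x`. -/
noncomputable def pFun (m : ℕ) (B : ℕ → ℝ) (q : ℕ → ℕ → ℝ) (x : ℝ) (i : ℕ) : ℝ :=
  outProb m B q (binIdx m B x) x i

/-- `ζ_n = Σ_{i=1}^n q_n(i) (B n − B i)`. -/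
noncomputable def zeta (B : ℕ → ℝ) (q : ℕ → ℕ → ℝ) (n : ℕ) : ℝ :=
  ∑ i ∈ Finset.Icc 1 n, q n i * (B n - B i)

/-!
For an input `x ∈ [B j, B (j+1))` the mechanism draws `i ≤ j` from `q j` and, independently, a bin
`r > j` from the reflection of `q (m - j)`, and then rounds `x` to `B i` or `B r` without bias.
Given `(i, r)`, the expected absolute error is `2uv / (u + v)` with `u = x - B i` and `v = B r - x`;
this is the harmonic mean of `u` and `v`, hence at most `(u + v) / 2 = (B r - B i) / 2`. Splitting
the gap `B r - B i` at `B (j+1)` and `B j`, and using the symmetry of the bins for the part above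
`B (j+1)`, its mean over `(i, r)` is `ζ_{m-j} + (B (j+1) - B j) + ζ_j`. So the error is bounded on
each cell by half of this constant, and integrating cell by cell yields half of the claimed bound.
-/

/-- The weights `w 1, …, w n` form a probability mass function on `{1, …, n}`; the values of `w`
outside this range are arbitrary. -/
structure IsProbWeight (w : ℕ → ℝ) (n : ℕ) : Prop where
  nonneg : ∀ i ∈ Icc 1 n, 0 ≤ w i
  sum_eq_one : ∑ i ∈ Icc 1 n, w i = 1

/-- The probability that the mechanism draws the bins `i ≤ j < r` for an input in the `j`-th cell;
the upper bin is drawn from `q (m - j)`, counting from the top. -/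
def pairWeight (m : ℕ) (q : ℕ → ℕ → ℝ) (j i r : ℕ) : ℝ :=
  q j i * q (m - j) (m + 1 - r)

/-- The expected absolute error at `x` of the output distribution that belongs to the `j`-th cell,
defined for all real `x`, whether or not `x` lies in that cell. -/
noncomputable def cellError (m : ℕ) (B : ℕ → ℝ) (q : ℕ → ℕ → ℝ) (j : ℕ) (x : ℝ) : ℝ :=
  ∑ i ∈ Icc 1 m, outProb m B q j x i * |B i - x|

/-- The expected absolute error of the quantization mechanism at the input `x`. -/
noncomputable def absError (m : ℕ) (B : ℕ → ℝ) (q : ℕ → ℕ → ℝ) (x : ℝ) : ℝ :=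
  ∑ i ∈ Icc 1 m, pFun m B q x i * |B i - x|

/-- For symmetric bins, the mean of the gap `B r - B i` between the two bins drawn for an input in
the `j`-th cell, written as `ζ_{m-j} + (B (j+1) - B j) + ζ_j`. -/
noncomputable def meanGap (m : ℕ) (B : ℕ → ℝ) (q : ℕ → ℕ → ℝ) (j : ℕ) : ℝ :=
  zeta B q (m - j) + (B (j + 1) - B j) + zeta B q j

/-- The integral over `[a, b]` of the step function with value `meanGap m B q j` on the `j`-th cell,
where `B s` and `B t` are the first and the last bin in `[a, b]`. -/
noncomputable def meanGapIntegral (m : ℕ) (B : ℕ → ℝ) (q : ℕ → ℕ → ℝ) (s t : ℕ) (a b : ℝ) : ℝ :=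
  (B s - a) * meanGap m B q (s - 1) + ∑ n ∈ Ico s t, (B (n + 1) - B n) * meanGap m B q n
    + (b - B t) * meanGap m B q t

lemma two_mul_mul_div_add_le_half {u v : ℝ} (h : 0 < u + v) :
    2 * (u * v) / (u + v) ≤ (u + v) / 2 := by
  rw [div_le_iff₀ h]
  linarith [four_mul_le_sq_add u v]

lemma sum_sum_mul_mul_sub {ι κ R : Type*} [CommRing R] {S : Finset ι} {T : Finset κ}
    {α : ι → R} {β : κ → R} (hα : ∑ i ∈ S, α i = 1) (hβ : ∑ r ∈ T, β r = 1)
    (y : ι → R) (z : κ → R) (v w : R) :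
    ∑ i ∈ S, ∑ r ∈ T, α i * β r * (z r - y i)
      = ∑ r ∈ T, β r * (z r - w) + (w - v) + ∑ i ∈ S, α i * (v - y i) := by
  calc ∑ i ∈ S, ∑ r ∈ T, α i * β r * (z r - y i)
      = (∑ i ∈ S, α i) * ∑ r ∈ T, β r * (z r - w) + (w - v) * ((∑ i ∈ S, α i) * ∑ r ∈ T, β r)
          + (∑ i ∈ S, α i * (v - y i)) * ∑ r ∈ T, β r := by
        rw [sum_mul_sum, sum_mul_sum, sum_mul_sum]
        simp only [mul_sum, ← sum_add_distrib]
        exact sum_congr rfl fun i _ => sum_congr rfl fun r _ => by ring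
    _ = _ := by rw [hα, hβ]; ring

lemma sum_Icc_one_add_sum_Icc_succ {M : Type*} [AddCommMonoid M] (f : ℕ → M) {j m : ℕ}
    (hj : j ≤ m) : ∑ i ∈ Icc 1 j, f i + ∑ i ∈ Icc (j + 1) m, f i = ∑ i ∈ Icc 1 m, f i := by
  simpa only [← Icc_add_one_left_eq_Ioc, zero_add] using sum_Ioc_consecutive f j.zero_le hj

lemma sum_Icc_succ_reflect {M : Type*} [AddCommMonoid M] (f : ℕ → M) {j m : ℕ} (hj : j ≤ m) :
    ∑ r ∈ Icc (j + 1) m, f (m + 1 - r) = ∑ k ∈ Icc 1 (m - j), f k := by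
  simpa only [Ico_add_one_right_eq_Icc, Nat.add_sub_add_right, Nat.add_sub_cancel_left,
    Nat.sub_add_comm hj] using sum_Ico_reflect f (j + 1) (Nat.le_succ (m + 1))

section Mechanism

variable {m j : ℕ} {B : ℕ → ℝ} {q : ℕ → ℕ → ℝ} {σ x : ℝ}

lemma zeta_nonneg {n : ℕ} (hB : MonotoneOn B (Set.Icc 1 n)) (hq : IsProbWeight (q n) n) :
    0 ≤ zeta B q n := by
  refine sum_nonneg fun i hi => mul_nonneg (hq.nonneg i hi) (sub_nonneg.2 ?_)
  obtain ⟨h1i, hin⟩ := mem_Icc.1 hi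
  exact hB ⟨h1i, hin⟩ ⟨h1i.trans hin, le_rfl⟩ hin

lemma meanGap_nonneg (hB : MonotoneOn B (Set.Icc 1 m)) (hq : ∀ n ∈ Ico 1 m, IsProbWeight (q n) n)
    (hj : j ∈ Ico 1 m) : 0 ≤ meanGap m B q j := by
  obtain ⟨h1j, hjm⟩ := mem_Ico.1 hj
  have zeta_nonneg_of_mem {n : ℕ} (hn : n ∈ Ico 1 m) : 0 ≤ zeta B q n :=
    zeta_nonneg (hB.mono (Set.Icc_subset_Icc_right (mem_Ico.1 hn).2.le)) (hq n hn)
  have hgap : B j ≤ B (j + 1) := hB ⟨h1j, hjm.le⟩ ⟨by omega, hjm⟩ j.le_succ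
  have hupper := zeta_nonneg_of_mem (n := m - j) (mem_Ico.2 (by omega))
  have hlower := zeta_nonneg_of_mem hj
  unfold meanGap
  linarith

lemma sum_reflect_mul_sub_eq_zeta (hsym : ∀ i ∈ Icc 1 m, B i + B (m + 1 - i) = σ) (hjm : j < m) :
    ∑ r ∈ Icc (j + 1) m, q (m - j) (m + 1 - r) * (B r - B (j + 1)) = zeta B q (m - j) := by
  rw [zeta, ← sum_Icc_succ_reflect _ hjm.le]
  refine sum_congr rfl fun r hr => ?_
  obtain ⟨hjr, hrm⟩ := mem_Icc.1 hr
  have hr_sym := hsym r (mem_Icc.2 (by omega))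
  have hj_sym := hsym (j + 1) (mem_Icc.2 (by omega))
  rw [Nat.add_sub_add_right] at hj_sym
  congr 1
  linarith

lemma sum_pairWeight_mul_sub_eq_meanGap (hsym : ∀ i ∈ Icc 1 m, B i + B (m + 1 - i) = σ)
    (hlow : IsProbWeight (q j) j) (hupp : IsProbWeight (q (m - j)) (m - j)) (hjm : j < m) :
    ∑ i ∈ Icc 1 j, ∑ r ∈ Icc (j + 1) m, pairWeight m q j i r * (B r - B i) = meanGap m B q j := by
  have hupp_sum : ∑ r ∈ Icc (j + 1) m, q (m - j) (m + 1 - r) = 1 :=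
    (sum_Icc_succ_reflect (q (m - j)) hjm.le).trans hupp.sum_eq_one
  simp only [pairWeight]
  rw [sum_sum_mul_mul_sub hlow.sum_eq_one hupp_sum B B (B j) (B (j + 1)),
    sum_reflect_mul_sub_eq_zeta hsym hjm, meanGap, zeta.eq_1 B q j]

lemma outProb_mul_abs_of_le {i : ℕ} (hij : i ≤ j) (hix : B i ≤ x) :
    outProb m B q j x i * |B i - x| =
      ∑ r ∈ Icc (j + 1) m, pairWeight m q j i r * ((x - B i) * (B r - x) / (B r - B i)) := by
  rw [outProb, if_pos hij, abs_of_nonpos (sub_nonpos.2 hix), mul_sum, sum_mul]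
  refine sum_congr rfl fun r hr => ?_
  rw [pairWeight, Nat.sub_add_comm (mem_Icc.1 hr).2]
  ring

lemma outProb_mul_abs_of_lt {r : ℕ} (hjr : j < r) (hxr : x ≤ B r) :
    outProb m B q j x r * |B r - x| =
      ∑ i ∈ Icc 1 j, pairWeight m q j i r * ((x - B i) * (B r - x) / (B r - B i)) := by
  rw [outProb, if_neg hjr.not_ge, abs_of_nonneg (sub_nonneg.2 hxr), mul_sum, sum_mul]
  refine sum_congr rfl fun i _ => ?_
  rw [pairWeight]
  ring

lemma le_of_mem_Icc_of_mem_cell (hB : MonotoneOn B (Set.Icc 1 m)) (hjm : j < m)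
    (hx : x ∈ Set.Ico (B j) (B (j + 1))) {i : ℕ} (hi : i ∈ Icc 1 j) : B i ≤ x := by
  obtain ⟨h1i, hij⟩ := mem_Icc.1 hi
  exact (hB ⟨h1i, by omega⟩ ⟨by omega, hjm.le⟩ hij).trans hx.1

lemma lt_of_mem_Icc_succ_of_mem_cell (hB : MonotoneOn B (Set.Icc 1 m))
    (hx : x ∈ Set.Ico (B j) (B (j + 1))) {r : ℕ} (hr : r ∈ Icc (j + 1) m) : x < B r := by
  obtain ⟨hjr, hrm⟩ := mem_Icc.1 hr
  exact hx.2.trans_le (hB ⟨by omega, by omega⟩ ⟨by omega, hrm⟩ hjr)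

lemma cellError_eq_sum_pairWeight (hB : MonotoneOn B (Set.Icc 1 m)) (hjm : j < m)
    (hx : x ∈ Set.Ico (B j) (B (j + 1))) :
    cellError m B q j x = ∑ i ∈ Icc 1 j, ∑ r ∈ Icc (j + 1) m,
      pairWeight m q j i r * (2 * ((x - B i) * (B r - x)) / (B r - B i)) := by
  have hlow : ∑ i ∈ Icc 1 j, outProb m B q j x i * |B i - x| = ∑ i ∈ Icc 1 j,
      ∑ r ∈ Icc (j + 1) m, pairWeight m q j i r * ((x - B i) * (B r - x) / (B r - B i)) :=
    sum_congr rfl fun i hi =>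
      outProb_mul_abs_of_le (mem_Icc.1 hi).2 (le_of_mem_Icc_of_mem_cell hB hjm hx hi)
  have hupp : ∑ r ∈ Icc (j + 1) m, outProb m B q j x r * |B r - x| = ∑ i ∈ Icc 1 j,
      ∑ r ∈ Icc (j + 1) m, pairWeight m q j i r * ((x - B i) * (B r - x) / (B r - B i)) := by
    rw [sum_comm]
    exact sum_congr rfl fun r hr =>
      outProb_mul_abs_of_lt (mem_Icc.1 hr).1 (lt_of_mem_Icc_succ_of_mem_cell hB hx hr).le
  rw [cellError, ← sum_Icc_one_add_sum_Icc_succ _ hjm.le, hlow, hupp]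
  simp only [← sum_add_distrib]
  exact sum_congr rfl fun i _ => sum_congr rfl fun r _ => by ring

lemma pairWeight_nonneg (hlow : IsProbWeight (q j) j) (hupp : IsProbWeight (q (m - j)) (m - j))
    {i r : ℕ} (hi : i ∈ Icc 1 j) (hr : r ∈ Icc (j + 1) m) : 0 ≤ pairWeight m q j i r := by
  refine mul_nonneg (hlow.nonneg i hi) (hupp.nonneg _ ?_)
  rw [mem_Icc] at hr ⊢
  omega

lemma cellError_le_meanGap_div_two (hB : MonotoneOn B (Set.Icc 1 m))
    (hsym : ∀ i ∈ Icc 1 m, B i + B (m + 1 - i) = σ) (hlow : IsProbWeight (q j) j)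
    (hupp : IsProbWeight (q (m - j)) (m - j)) (hjm : j < m) (hx : x ∈ Set.Ico (B j) (B (j + 1))) :
    cellError m B q j x ≤ meanGap m B q j / 2 := by
  rw [cellError_eq_sum_pairWeight hB hjm hx,
    ← sum_pairWeight_mul_sub_eq_meanGap hsym hlow hupp hjm, sum_div]
  refine sum_le_sum fun i hi => ?_
  rw [sum_div]
  refine sum_le_sum fun r hr => ?_
  rw [mul_div_assoc (pairWeight m q j i r)]
  refine mul_le_mul_of_nonneg_left ?_ (pairWeight_nonneg hlow hupp hi hr)
  have hix := le_of_mem_Icc_of_mem_cell hB hjm hx hi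
  have hxr := lt_of_mem_Icc_succ_of_mem_cell hB hx hr
  have hgap : B r - B i = (x - B i) + (B r - x) := by ring
  rw [hgap]
  exact two_mul_mul_div_add_le_half (by linarith)

lemma continuous_cellError : Continuous (cellError m B q j) := by
  refine continuous_finsetSum _ fun i _ => ?_
  unfold outProb
  split_ifs <;> fun_prop

lemma binIdx_eq (hB : MonotoneOn B (Set.Icc 1 m)) (hj : j ∈ Ico 1 m)
    (hx : x ∈ Set.Ico (B j) (B (j + 1))) : binIdx m B x = j := by
  obtain ⟨h1j, hjm⟩ := mem_Ico.1 hj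
  refine le_antisymm (Finset.sup_le fun k hk => ?_) (le_sup (f := id) ?_)
  · obtain ⟨hkm, hkx⟩ := mem_filter.1 hk
    rw [mem_Icc] at hkm
    change k ≤ j
    by_contra! hjk
    have hxk := lt_of_mem_Icc_succ_of_mem_cell hB hx (mem_Icc.2 ⟨hjk, by omega⟩)
    exact hkx.not_gt hxk
  · exact mem_filter.2 ⟨mem_Icc.2 (by omega), hx.1⟩

section Subinterval

variable {u v : ℝ}

lemma eqOn_cellError_absError (hB : MonotoneOn B (Set.Icc 1 m)) (hj : j ∈ Ico 1 m) :
    Set.EqOn (cellError m B q j) (absError m B q) (Set.Ico (B j) (B (j + 1))) := fun x hx => by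
  simp only [cellError, absError, pFun, binIdx_eq hB hj hx]

lemma intervalIntegrable_absError_of_cell (hB : MonotoneOn B (Set.Icc 1 m)) (hj : j ∈ Ico 1 m)
    (huv : u ≤ v) (hu : B j ≤ u) (hv : v ≤ B (j + 1)) :
    IntervalIntegrable (absError m B q) MeasureTheory.volume u v := by
  refine (continuous_cellError.intervalIntegrable u v).congr_uIoo
    ((eqOn_cellError_absError hB hj).mono ?_)
  rw [Set.uIoo_of_le huv]
  exact Set.Ioo_subset_Ico_self.trans (Set.Ico_subset_Ico hu hv)

lemma integral_absError_le_of_cell (hB : MonotoneOn B (Set.Icc 1 m))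
    (hsym : ∀ i ∈ Icc 1 m, B i + B (m + 1 - i) = σ) (hq : ∀ n ∈ Ico 1 m, IsProbWeight (q n) n)
    (hj : j ∈ Ico 1 m) (huv : u ≤ v) (hu : B j ≤ u) (hv : v ≤ B (j + 1)) :
    ∫ x in u..v, absError m B q x ≤ (v - u) * (meanGap m B q j / 2) := by
  obtain ⟨h1j, hjm⟩ := mem_Ico.1 hj
  calc ∫ x in u..v, absError m B q x
      ≤ ∫ _ in u..v, meanGap m B q j / 2 := by
        refine intervalIntegral.integral_mono_on_of_le_Ioo huv
          (intervalIntegrable_absError_of_cell hB hj huv hu hv) intervalIntegrable_const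
          fun x hx => ?_
        have hx_cell : x ∈ Set.Ico (B j) (B (j + 1)) := ⟨hu.trans hx.1.le, hx.2.trans_le hv⟩
        rw [← eqOn_cellError_absError hB hj hx_cell]
        exact cellError_le_meanGap_div_two hB hsym (hq j hj)
          (hq (m - j) (mem_Ico.2 (by omega))) hjm hx_cell
    _ = (v - u) * (meanGap m B q j / 2) := by
        rw [intervalIntegral.integral_const, smul_eq_mul]

end Subinterval

section Interval

variable {s t : ℕ} {a b : ℝ}

lemma meanGapIntegral_nonneg (hB : MonotoneOn B (Set.Icc 1 m))
    (hq : ∀ n ∈ Ico 1 m, IsProbWeight (q n) n) (hs : 2 ≤ s) (hst : s ≤ t) (htm : t < m)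
    (ha : a ≤ B s) (hb : B t ≤ b) : 0 ≤ meanGapIntegral m B q s t a b := by
  have hgap {n : ℕ} (h1n : 1 ≤ n) (hnm : n < m) : 0 ≤ meanGap m B q n :=
    meanGap_nonneg hB hq (mem_Ico.2 ⟨h1n, hnm⟩)
  refine add_nonneg (add_nonneg ?_ (sum_nonneg fun n hn => ?_)) ?_
  · exact mul_nonneg (sub_nonneg.2 ha) (hgap (by omega) (by omega))
  · obtain ⟨hsn, hnt⟩ := mem_Ico.1 hn
    have hstep : B n ≤ B (n + 1) := hB ⟨by omega, by omega⟩ ⟨by omega, by omega⟩ n.le_succ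
    exact mul_nonneg (sub_nonneg.2 hstep) (hgap (by omega) (by omega))
  · exact mul_nonneg (sub_nonneg.2 hb) (hgap (by omega) htm)

lemma intervalIntegrable_absError_and_integral_le_of_bins (hB : MonotoneOn B (Set.Icc 1 m))
    (hsym : ∀ i ∈ Icc 1 m, B i + B (m + 1 - i) = σ) (hq : ∀ n ∈ Ico 1 m, IsProbWeight (q n) n)
    (hs : 1 ≤ s) (hst : s ≤ t) (htm : t ≤ m) :
    IntervalIntegrable (absError m B q) MeasureTheory.volume (B s) (B t) ∧
      ∫ x in (B s)..(B t), absError m B q x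
        ≤ (∑ n ∈ Ico s t, (B (n + 1) - B n) * meanGap m B q n) / 2 := by
  have hmem {n : ℕ} (hn : s ≤ n ∧ n < t) : n ∈ Ico 1 m := mem_Ico.2 (by omega)
  have hstep {n : ℕ} (hn : s ≤ n ∧ n < t) : B n ≤ B (n + 1) :=
    hB ⟨by omega, by omega⟩ ⟨by omega, by omega⟩ n.le_succ
  have hint (n : ℕ) (hn : n ∈ Set.Ico s t) :
      IntervalIntegrable (absError m B q) MeasureTheory.volume (B n) (B (n + 1)) :=
    intervalIntegrable_absError_of_cell hB (hmem hn) (hstep hn) le_rfl le_rfl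
  refine ⟨IntervalIntegrable.trans_iterate_Ico hst hint, ?_⟩
  rw [← intervalIntegral.sum_integral_adjacent_intervals_Ico hst hint, sum_div]
  refine sum_le_sum fun n hn => ?_
  rw [mul_div_assoc]
  have hn := mem_Ico.1 hn
  exact integral_absError_le_of_cell hB hsym hq (hmem hn) (hstep hn) le_rfl le_rfl

theorem uniform_input_mae_bound_general (hB : MonotoneOn B (Set.Icc 1 m))
    (hsym : ∀ i ∈ Icc 1 m, B i + B (m + 1 - i) = σ) (hq : ∀ n ∈ Ico 1 m, IsProbWeight (q n) n)
    (hs : 2 ≤ s) (hst : s ≤ t) (htm : t < m) (ha : a ∈ Set.Icc (B (s - 1)) (B s))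
    (hb : b ∈ Set.Icc (B t) (B (t + 1))) :
    IntervalIntegrable (absError m B q) MeasureTheory.volume a b ∧
      ∫ x in a..b, absError m B q x ≤ meanGapIntegral m B q s t a b / 2 := by
  have hs_mem : s - 1 ∈ Ico 1 m := mem_Ico.2 (by omega)
  have ht_mem : t ∈ Ico 1 m := mem_Ico.2 (by omega)
  have hs_le : B s ≤ B (s - 1 + 1) := by rw [Nat.sub_add_cancel (by omega)]
  have hint_first := intervalIntegrable_absError_of_cell (q := q) hB hs_mem ha.2 ha.1 hs_le
  have hint_last := intervalIntegrable_absError_of_cell (q := q) hB ht_mem hb.1 le_rfl hb.2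
  obtain ⟨hint_bins, hle_bins⟩ := intervalIntegrable_absError_and_integral_le_of_bins
    hB hsym hq (by omega) hst htm.le
  have hle_first := integral_absError_le_of_cell hB hsym hq hs_mem ha.2 ha.1 hs_le
  have hle_last := integral_absError_le_of_cell hB hsym hq ht_mem hb.1 le_rfl hb.2
  have hint_upto_last := hint_first.trans hint_bins
  refine ⟨hint_upto_last.trans hint_last, ?_⟩
  rw [← intervalIntegral.integral_add_adjacent_intervals hint_upto_last hint_last,
    ← intervalIntegral.integral_add_adjacent_intervals hint_first hint_bins, meanGapIntegral]
  linarith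

end Interval

end Mechanism

/-- (Theorem 3, uniform input) The mean absolute error against the uniform input distribution
on `[−c,c]` satisfies
`∫_{−c}^c Σ_{i=1}^m p(x,i)|B i − x| dx ≤ (B s + c)(ζ_{m−s+1} + (B s − B (s−1)) + ζ_{s−1})
 + Σ_{n=s}^{t−1} (B (n+1) − B n)(ζ_{m−n} + (B (n+1) − B n) + ζ_n)
 + (c − B t)(ζ_{m−t} + (B (t+1) − B t) + ζ_t)`. -/
theorem uniform_input_mae_bound
    (m : ℕ) (hm : 2 ≤ m)
    (B : ℕ → ℝ)
    (hB : ∀ i j : ℕ, 1 ≤ i → i < j → j ≤ m → B i < B j)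
    (hsym : ∀ i : ℕ, 1 ≤ i → i ≤ m → B i = -B (m + 1 - i))
    (c Δ : ℝ) (hc : 0 < c) (hΔ : 0 < Δ)
    (hB1 : B 1 = -c - Δ) (hBm : B m = c + Δ)
    (s t : ℕ) (hs2 : 2 ≤ s) (hst : s ≤ t) (ht : t ≤ m - 1)
    (hs_lt : B (s - 1) < -c) (hs_le : -c ≤ B s)
    (ht_le : B t ≤ c) (ht_lt : c < B (t + 1))
    (q : ℕ → ℕ → ℝ)
    (hq_nonneg : ∀ n i : ℕ, 1 ≤ n → n ≤ m → 0 ≤ q n i)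
    (hq_sum : ∀ n : ℕ, 1 ≤ n → n ≤ m → ∑ i ∈ Finset.Icc 1 n, q n i = 1) :
    (∫ x in (-c)..c, ∑ i ∈ Finset.Icc 1 m, pFun m B q x i * |B i - x|) ≤
      (B s + c) * (zeta B q (m - s + 1) + (B s - B (s - 1)) + zeta B q (s - 1))
      + ∑ n ∈ Finset.Icc s (t - 1),
          (B (n + 1) - B n) * (zeta B q (m - n) + (B (n + 1) - B n) + zeta B q n)
      + (c - B t) * (zeta B q (m - t) + (B (t + 1) - B t) + zeta B q t) := by
  have hmono : MonotoneOn B (Set.Icc 1 m) :=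
    StrictMonoOn.monotoneOn fun i hi j hj hij => hB i j hi.1 hij hj.2
  have hsum : ∀ i ∈ Icc 1 m, B i + B (m + 1 - i) = 0 := fun i hi => by
    rw [hsym i (mem_Icc.1 hi).1 (mem_Icc.1 hi).2, neg_add_cancel]
  have hq (n : ℕ) (hn : n ∈ Ico 1 m) : IsProbWeight (q n) n :=
    have ⟨h1n, hnm⟩ := mem_Ico.1 hn
    ⟨fun i _ => hq_nonneg n i h1n hnm.le, hq_sum n h1n hnm.le⟩
  have htm : t < m := by omega
  have hs_pred_succ : s - 1 + 1 = s := by omega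
  have hm_sub_pred : m - (s - 1) = m - s + 1 := by omega
  have hIcc : Icc s (t - 1) = Ico s t :=
    Icc_sub_one_right_eq_Ico_of_not_isMin (not_isMin_of_lt (show 0 < t by omega)) s
  have hbound := (uniform_input_mae_bound_general hmono hsum hq hs2 hst htm ⟨hs_lt.le, hs_le⟩
    ⟨ht_le, ht_lt.le⟩).2.trans (half_le_self
      (meanGapIntegral_nonneg hmono hq hs2 hst htm hs_le ht_le))
  simpa only [absError, meanGapIntegral, meanGap, hs_pred_succ, hm_sub_pred, hIcc,
    sub_neg_eq_add] using hbound
end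

section
/- (Maximum part of Lemma 2) Assume that q_i(i) ≥ q_j(i) for all indices 1 ≤ i ≤ j ≤ m. Then for every i ∈ {1,…,m}, every 1 ≤ j ≤ m−1 and every x ∈ [B_j, B_{j+1}), the output probability satisfies p(x,i) ≤ max( q_i(i), q_{m+1−i}(m+1−i) ). -/
/-! Since `x` lies between `B i` and the partner bin `B r` (resp. `B l`), each interpolation factor
`(B r - x) / (B r - B i)` (resp. `(x - B l) / (B i - B l)`) is at most `1`, so the sum in `p(x, i)`
is at most the total mass of a probability mass function. This leaves the prefactor `q_j(i)` if
`i ≤ j` and `q_{m-j}(m+1-i)` if `i > j`, which monotonicity bounds by `q_i(i)` and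
`q_{m+1-i}(m+1-i)`. -/

open Finset

lemma sum_mul_le_sum_of_le_one {ι R : Type*} [Semiring R] [PartialOrder R] [IsOrderedRing R]
    {s : Finset ι} {w f : ι → R} (hw : ∀ k ∈ s, 0 ≤ w k) (hf : ∀ k ∈ s, f k ≤ 1) :
    ∑ k ∈ s, w k * f k ≤ ∑ k ∈ s, w k :=
  sum_le_sum fun k hk ↦ mul_le_of_le_one_right (hw k hk) (hf k hk)

lemma sum_Icc_reflect_add_one {M : Type*} [AddCommMonoid M] (f : ℕ → M) (j m : ℕ) :
    ∑ r ∈ Icc (j + 1) m, f (m - r + 1) = ∑ k ∈ Icc 1 (m - j), f k := by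
  calc ∑ r ∈ Icc (j + 1) m, f (m - r + 1)
      = ∑ r ∈ Ico (j + 1) (m + 1), f (m - r + 1) := by rw [Ico_add_one_right_eq_Icc]
    _ = ∑ k ∈ Ico 0 (m - j), f (k + 1) := by
        rw [sum_Ico_reflect (fun k ↦ f (k + 1)) _ le_rfl, Nat.sub_self, Nat.add_sub_add_right]
    _ = ∑ k ∈ Ico 1 (m - j + 1), f k := by rw [sum_Ico_add', zero_add]
    _ = ∑ k ∈ Icc 1 (m - j), f k := by rw [Ico_add_one_right_eq_Icc]

section OutProb

variable {m : ℕ} {B : ℕ → ℝ} {q : ℕ → ℕ → ℝ} {i j : ℕ} {x : ℝ}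

lemma outProb_le_of_le (hB : MonotoneOn B (Set.Icc 1 m)) (hi : 1 ≤ i) (hij : i ≤ j) (hjm : j ≤ m)
    (hx : B j ≤ x) (hqi : 0 ≤ q j i) (hq : ∀ k ∈ Icc 1 (m - j), 0 ≤ q (m - j) k)
    (hq_sum : ∑ k ∈ Icc 1 (m - j), q (m - j) k ≤ 1) :
    outProb m B q j x i ≤ q j i := by
  have hBix : B i ≤ x := (hB ⟨hi, hij.trans hjm⟩ ⟨hi.trans hij, hjm⟩ hij).trans hx
  have hweight : ∀ r ∈ Icc (j + 1) m, 0 ≤ q (m - j) (m - r + 1) := fun r hr ↦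
    hq _ (by rw [mem_Icc] at hr ⊢; lia)
  have hfactor : ∀ r ∈ Icc (j + 1) m, (B r - x) / (B r - B i) ≤ 1 := fun r hr ↦ by
    have ⟨hjr, hrm⟩ := mem_Icc.1 hr
    have hBir : B i ≤ B r := hB ⟨hi, hij.trans hjm⟩ ⟨by lia, hrm⟩ (by lia)
    exact div_le_one_of_le₀ (sub_le_sub_left hBix _) (sub_nonneg.2 hBir)
  rw [outProb, if_pos hij]
  refine mul_le_of_le_one_right hqi ?_
  calc ∑ r ∈ Icc (j + 1) m, q (m - j) (m - r + 1) * ((B r - x) / (B r - B i))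
      ≤ ∑ r ∈ Icc (j + 1) m, q (m - j) (m - r + 1) := sum_mul_le_sum_of_le_one hweight hfactor
    _ = ∑ k ∈ Icc 1 (m - j), q (m - j) k := sum_Icc_reflect_add_one _ j m
    _ ≤ 1 := hq_sum

lemma outProb_le_of_lt (hB : MonotoneOn B (Set.Icc 1 m)) (hji : j < i) (him : i ≤ m)
    (hx : x ≤ B (j + 1)) (hqi : 0 ≤ q (m - j) (m + 1 - i)) (hq : ∀ k ∈ Icc 1 j, 0 ≤ q j k)
    (hq_sum : ∑ k ∈ Icc 1 j, q j k ≤ 1) :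
    outProb m B q j x i ≤ q (m - j) (m + 1 - i) := by
  have hxBi : x ≤ B i := hx.trans (hB ⟨by lia, by lia⟩ ⟨by lia, him⟩ hji)
  have hfactor : ∀ l ∈ Icc 1 j, (x - B l) / (B i - B l) ≤ 1 := fun l hl ↦ by
    have ⟨hl1, hlj⟩ := mem_Icc.1 hl
    have hBli : B l ≤ B i := hB ⟨hl1, by lia⟩ ⟨by lia, him⟩ (by lia)
    exact div_le_one_of_le₀ (sub_le_sub_right hxBi _) (sub_nonneg.2 hBli)
  rw [outProb, if_neg hji.not_ge]
  exact mul_le_of_le_one_right hqi ((sum_mul_le_sum_of_le_one hq hfactor).trans hq_sum)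

end OutProb

/-- (Maximum part of Lemma 2) If `q_i(i) ≥ q_j(i)` for all `1 ≤ i ≤ j ≤ m`, then for every
`i ∈ {1,…,m}`, `1 ≤ j ≤ m−1`, and `x ∈ [B j, B (j+1))`,
`p(x,i) ≤ max(q_i(i), q_{m+1−i}(m+1−i))`. -/
theorem output_prob_max_bound
    (m : ℕ) (hm : 2 ≤ m)
    (B : ℕ → ℝ)
    (hB : ∀ i j : ℕ, 1 ≤ i → i < j → j ≤ m → B i < B j)
    (q : ℕ → ℕ → ℝ)
    (hq_nonneg : ∀ n i : ℕ, 1 ≤ n → n ≤ m → 0 ≤ q n i)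
    (hq_sum : ∀ n : ℕ, 1 ≤ n → n ≤ m → ∑ i ∈ Finset.Icc 1 n, q n i = 1)
    (hmono : ∀ i j : ℕ, 1 ≤ i → i ≤ j → j ≤ m → q j i ≤ q i i)
    (i : ℕ) (hi1 : 1 ≤ i) (hi2 : i ≤ m)
    (j : ℕ) (hj1 : 1 ≤ j) (hj2 : j ≤ m - 1)
    (x : ℝ) (hx1 : B j ≤ x) (hx2 : x < B (j + 1)) :
    outProb m B q j x i ≤ max (q i i) (q (m + 1 - i) (m + 1 - i)) := by
  have hB_mono : MonotoneOn B (Set.Icc 1 m) :=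
    StrictMonoOn.monotoneOn fun a ha b hb hab ↦ hB a b ha.1 hab hb.2
  have hjm : j ≤ m := by lia
  have hmj : 1 ≤ m - j := by lia
  have hmj_le : m - j ≤ m := Nat.sub_le m j
  rcases le_or_gt i j with hij | hji
  · calc outProb m B q j x i
        ≤ q j i := outProb_le_of_le hB_mono hi1 hij hjm hx1 (hq_nonneg j i hj1 hjm)
          (fun k _ ↦ hq_nonneg (m - j) k hmj hmj_le) (hq_sum (m - j) hmj hmj_le).le
      _ ≤ q i i := hmono i j hi1 hij hjm
      _ ≤ max (q i i) (q (m + 1 - i) (m + 1 - i)) := le_max_left _ _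
  · calc outProb m B q j x i
        ≤ q (m - j) (m + 1 - i) := outProb_le_of_lt hB_mono hji hi2 hx2.le
          (hq_nonneg (m - j) (m + 1 - i) hmj hmj_le) (fun k _ ↦ hq_nonneg j k hj1 hjm)
          (hq_sum j hj1 hjm).le
      _ ≤ q (m + 1 - i) (m + 1 - i) := hmono (m + 1 - i) (m - j) (by lia) (by lia) hmj_le
      _ ≤ max (q i i) (q (m + 1 - i) (m + 1 - i)) := le_max_right _ _
end

section
/- (Lower bound on output probabilities under the linear constraints of Theorem 6) Assume: (i) q_j(i) ≥ q_{j+1}(i) for all 1 ≤ i ≤ j ≤ m−1; (ii) q_j(i) ≤ q_j(i+1) for all 1 ≤ i < j ≤ m; and (iii) q_{m−k+1}(m−r+1)·(B_r − B_k) ≥ q_{m−k}(m−r+1)·(B_r − B_{k+1}) for all k with s ≤ k ≤ t and all r with k+2 ≤ r ≤ m. Let Λ = q_{t−1}(1) · Σ_{r=t+1}^{m} q_{m−t+1}(m−r+1)·(B_r − B_t)/(B_r − B_1) (the left limit of p(·,1) at B_t). Then for every x ∈ [−c, c] and every i ∈ {1,…,m}, p(x,i) ≥ min( Λ, p(c,1)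 ). -/
/-!
The reflection `x ↦ -x`, `i ↦ m + 1 - i` exchanges the two branches of the output distribution and
sends the cell `j` to the cell `m - j`. So only outputs below the input matter, provided cells are
taken closed, since the reflection exchanges their endpoints. There the probability is smallest at
`i = 1`, by (ii) and `B 1 ≤ B i`, and it decreases in `x`. Hence on the last cell `t` it is at least
`p(c, 1)`, and on a cell `j < t` at least the left limit of `p(·, 1)` at `B (j + 1)`. By (i) and
(iii) these left limits decrease from one bin to the next, so the smallest of them is `Λ`, the one
at `B t`.
-/

open Finset

section

variable {m : ℕ} {B : ℕ → ℝ} {q : ℕ → ℕ → ℝ}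

lemma binIdx_lt_iff (hB : MonotoneOn B (Set.Icc 1 m)) {x : ℝ} (hx : x < B m) {k : ℕ}
    (hk : k ∈ Set.Icc 1 m) : binIdx m B x < k ↔ x < B k := by
  rw [binIdx, Finset.sup_lt_iff (bot_lt_iff_ne_bot.mpr (Nat.one_le_iff_ne_zero.mp hk.1))]
  simp only [Finset.mem_filter, Finset.mem_Icc, id, and_imp]
  refine ⟨fun h => ?_, fun h j hj hjm hjx => ?_⟩
  · by_contra! hkx
    have hkm : k ≠ m := by
      rintro rfl
      exact hx.not_ge hkx
    exact lt_irrefl k (h k hk.1 (by have := hk.2; omega) hkx)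
  · exact hB.reflect_lt ⟨hj, by omega⟩ hk (hjx.trans_lt h)

lemma binIdx_mem_Icc (hB : MonotoneOn B (Set.Icc 1 m)) {a b : ℕ} (ha : 1 ≤ a) (hab : a ≤ b)
    (hb : b < m) {x : ℝ} (hx : x ∈ Set.Ico (B a) (B (b + 1))) :
    binIdx m B x ∈ Set.Icc a b := by
  have hxm : x < B m := hx.2.trans_le (hB ⟨by omega, by omega⟩ ⟨by omega, le_rfl⟩ (by omega))
  constructor
  · rw [← not_lt, binIdx_lt_iff hB hxm ⟨ha, by omega⟩]
    exact hx.1.not_gt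
  · rw [← Nat.lt_succ_iff, binIdx_lt_iff hB hxm ⟨by omega, by omega⟩]
    exact hx.2

lemma mem_Ico_binIdx (hB : MonotoneOn B (Set.Icc 1 m)) (hm : 1 < m) {x : ℝ}
    (hx : x ∈ Set.Ico (B 1) (B m)) :
    x ∈ Set.Ico (B (binIdx m B x)) (B (binIdx m B x + 1)) := by
  obtain ⟨hidx, hidx'⟩ : binIdx m B x ∈ Set.Icc 1 (m - 1) :=
    binIdx_mem_Icc hB le_rfl (by omega) (by omega) (by rwa [Nat.sub_add_cancel hm.le])
  constructor
  · rw [← not_lt, ← binIdx_lt_iff hB hx.2 ⟨hidx, by omega⟩]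
    exact lt_irrefl _
  · rw [← binIdx_lt_iff hB hx.2 ⟨by omega, by omega⟩]
    exact Nat.lt_succ_self _

lemma outProb_reflect (hsym : ∀ i : ℕ, 1 ≤ i → i ≤ m → B i = -B (m + 1 - i))
    {i j : ℕ} (hji : j < i) (him : i ≤ m) (x : ℝ) :
    outProb m B q (m - j) (-x) (m + 1 - i) = outProb m B q j x i := by
  rw [outProb, outProb, if_pos (by omega), if_neg (by omega)]
  congr 1
  refine Finset.sum_nbij' (fun r => m + 1 - r) (fun l => m + 1 - l) ?_ ?_ ?_ ?_ fun r hr => ?_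
  any_goals
    simp only [Finset.mem_Icc]
    omega
  rw [Finset.mem_Icc] at hr
  have hj : m - (m - j) = j := by omega
  have hr' : m - r + 1 = m + 1 - r := by omega
  rw [hj, hr', hsym r (by omega) hr.2, hsym i (by omega) him]
  congr 2 <;> ring

lemma weighted_ratio_nonneg (hB : MonotoneOn B (Set.Icc 1 m))
    (hq : ∀ n i : ℕ, 1 ≤ i → i ≤ n → n ≤ m → 0 ≤ q n i)
    {n i r : ℕ} (hi : 1 ≤ i) (hir : i ≤ r) (hrm : r ≤ m) (hrn : m - r + 1 ≤ n) (hnm : n ≤ m)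
    {y : ℝ} (hy : y ≤ B r) : 0 ≤ q n (m - r + 1) * ((B r - y) / (B r - B i)) :=
  mul_nonneg (hq _ _ (by omega) hrn hnm) <| div_nonneg (sub_nonneg.mpr hy) <|
    sub_nonneg.mpr (hB ⟨hi, by omega⟩ ⟨by omega, hrm⟩ hir)

lemma outProb_one_le_outProb (hB : StrictMonoOn B (Set.Icc 1 m))
    (hq : ∀ n i : ℕ, 1 ≤ i → i ≤ n → n ≤ m → 0 ≤ q n i)
    {i j : ℕ} (hi : 1 ≤ i) (hij : i ≤ j) (hj : j < m) (hqi : q j 1 ≤ q j i)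
    {x y : ℝ} (hxy : x ≤ y) (hy : y ≤ B (j + 1)) :
    outProb m B q j y 1 ≤ outProb m B q j x i := by
  have hyB {r : ℕ} (hr : r ∈ Finset.Icc (j + 1) m) : y ≤ B r := by
    rw [Finset.mem_Icc] at hr
    exact hy.trans (hB.monotoneOn ⟨by omega, by omega⟩ ⟨by omega, hr.2⟩ hr.1)
  rw [outProb, outProb, if_pos (by omega), if_pos hij]
  refine mul_le_mul hqi (Finset.sum_le_sum fun r hr => ?_) (Finset.sum_nonneg fun r hr => ?_)
    (hq j i hi hij hj.le)
  · have hyr := hyB hr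
    rw [Finset.mem_Icc] at hr
    have hBi : B 1 ≤ B i := hB.monotoneOn ⟨le_rfl, by omega⟩ ⟨hi, by omega⟩ hi
    have hBr : B i < B r := hB ⟨hi, by omega⟩ ⟨by omega, hr.2⟩ (by omega)
    refine mul_le_mul_of_nonneg_left ?_ (hq _ _ (by omega) (by omega) (by omega))
    exact div_le_div₀ (by linarith) (by linarith) (by linarith) (by linarith)
  · have hyr := hyB hr
    rw [Finset.mem_Icc] at hr
    exact weighted_ratio_nonneg hB.monotoneOn hq le_rfl (by omega) hr.2 (by omega) (by omega) hyr

/-- The left limit of `p(·, 1)` at the bin `B k`, for `2 ≤ k < m`; the paper's `Λ` is the case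
`k = t`. The sum starts at `k + 1` because the term `r = k` of the cell `k - 1` tends to `0`. -/
noncomputable def firstLeftLimit (m : ℕ) (B : ℕ → ℝ) (q : ℕ → ℕ → ℝ) (k : ℕ) : ℝ :=
  q (k - 1) 1 * ∑ r ∈ Finset.Icc (k + 1) m,
    q (m - k + 1) (m - r + 1) * ((B r - B k) / (B r - B 1))

lemma outProb_one_right_endpoint {j : ℕ} (hj : 1 ≤ j) (hjm : j < m) :
    outProb m B q j (B (j + 1)) 1 = firstLeftLimit m B q (j + 1) := by
  have hn : m - (j + 1) + 1 = m - j := by omega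
  rw [outProb, firstLeftLimit, if_pos hj, Nat.add_sub_cancel, hn,
    ← Finset.add_sum_Ioc_eq_sum_Icc (by omega : j + 1 ≤ m), Finset.Icc_add_one_left_eq_Ioc]
  simp only [sub_self, zero_div, mul_zero, zero_add]

lemma firstLeftLimit_succ_le (hB : MonotoneOn B (Set.Icc 1 m))
    (hq : ∀ n i : ℕ, 1 ≤ i → i ≤ n → n ≤ m → 0 ≤ q n i)
    {k : ℕ} (hk : 2 ≤ k) (hkm : k < m) (h1 : q k 1 ≤ q (k - 1) 1)
    (h3 : ∀ r : ℕ, k + 2 ≤ r → r ≤ m →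
      q (m - k) (m - r + 1) * (B r - B (k + 1)) ≤ q (m - k + 1) (m - r + 1) * (B r - B k)) :
    firstLeftLimit m B q (k + 1) ≤ firstLeftLimit m B q k := by
  have hle {a b : ℕ} (ha : 1 ≤ a) (hab : a ≤ b) (hb : b ≤ m) : B a ≤ B b :=
    hB ⟨ha, hab.trans hb⟩ ⟨ha.trans hab, hb⟩ hab
  have hn : m - (k + 1) + 1 = m - k := by omega
  rw [firstLeftLimit, firstLeftLimit, Nat.add_sub_cancel, hn]
  refine mul_le_mul h1 ?_ (Finset.sum_nonneg fun r hr => ?_)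
    (hq _ _ le_rfl (by omega) (by omega))
  · calc
      _ ≤ ∑ r ∈ Finset.Icc (k + 1 + 1) m,
            q (m - k + 1) (m - r + 1) * ((B r - B k) / (B r - B 1)) := by
        refine Finset.sum_le_sum fun r hr => ?_
        rw [Finset.mem_Icc] at hr
        rw [← mul_div_assoc, ← mul_div_assoc]
        exact div_le_div_of_nonneg_right (h3 r hr.1 hr.2)
          (sub_nonneg.mpr (hle le_rfl (by omega) hr.2))
      _ ≤ _ := by
        refine Finset.sum_le_sum_of_subset_of_nonneg
          (Finset.Icc_subset_Icc_left (by omega)) fun r hr _ => ?_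
        rw [Finset.mem_Icc] at hr
        exact weighted_ratio_nonneg hB hq le_rfl (by omega) hr.2 (by omega) (by omega)
          (hle (by omega) (by omega) hr.2)
  · rw [Finset.mem_Icc] at hr
    exact weighted_ratio_nonneg hB hq le_rfl (by omega) hr.2 (by omega) (by omega)
      (hle (by omega) (by omega) hr.2)

lemma antitoneOn_firstLeftLimit (hB : MonotoneOn B (Set.Icc 1 m))
    (hq : ∀ n i : ℕ, 1 ≤ i → i ≤ n → n ≤ m → 0 ≤ q n i)
    {a b : ℕ} (ha : 2 ≤ a) (hb : b ≤ m) (h1 : ∀ k : ℕ, a ≤ k → k < b → q k 1 ≤ q (k - 1) 1)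
    (h3 : ∀ k r : ℕ, a ≤ k → k < b → k + 2 ≤ r → r ≤ m →
      q (m - k) (m - r + 1) * (B r - B (k + 1)) ≤ q (m - k + 1) (m - r + 1) * (B r - B k)) :
    AntitoneOn (firstLeftLimit m B q) (Set.Icc a b) :=
  antitoneOn_of_add_one_le Set.ordConnected_Icc fun k _ hk hk' =>
    have hkb : k < b := hk'.2
    firstLeftLimit_succ_le hB hq (ha.trans hk.1) (hkb.trans_le hb) (h1 k hk.1 hkb)
      fun r => h3 k r hk.1 hkb

lemma min_le_outProb_of_le (hB : StrictMonoOn B (Set.Icc 1 m))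
    (hq : ∀ n i : ℕ, 1 ≤ i → i ≤ n → n ≤ m → 0 ≤ q n i)
    {a t : ℕ} (htm : t < m) {c : ℝ} (hct : c ≤ B (t + 1))
    (hΛ : AntitoneOn (firstLeftLimit m B q) (Set.Icc (a + 1) t))
    {i j : ℕ} (haj : a ≤ j) (hjt : j ≤ t) (hi : 1 ≤ i) (hij : i ≤ j) (hqi : q j 1 ≤ q j i)
    {x : ℝ} (hxc : x ≤ c) (hxj : x ≤ B (j + 1)) :
    min (firstLeftLimit m B q t) (outProb m B q t c 1) ≤ outProb m B q j x i := by
  rcases hjt.eq_or_lt with rfl | hlt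
  · exact (min_le_right _ _).trans (outProb_one_le_outProb hB hq hi hij htm hqi hxc hct)
  · calc
      _ ≤ firstLeftLimit m B q t := min_le_left _ _
      _ ≤ firstLeftLimit m B q (j + 1) := hΛ ⟨by omega, hlt⟩ ⟨by omega, le_rfl⟩ hlt
      _ = outProb m B q j (B (j + 1)) 1 :=
        (outProb_one_right_endpoint (hi.trans hij) (by omega)).symm
      _ ≤ outProb m B q j x i := outProb_one_le_outProb hB hq hi hij (by omega) hqi hxj le_rfl

lemma min_le_outProb (hB : StrictMonoOn B (Set.Icc 1 m))
    (hsym : ∀ i : ℕ, 1 ≤ i → i ≤ m → B i = -B (m + 1 - i))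
    (hq : ∀ n i : ℕ, 1 ≤ i → i ≤ n → n ≤ m → 0 ≤ q n i)
    (h2 : ∀ j i : ℕ, 1 ≤ i → i ≤ j → j < m → q j 1 ≤ q j i)
    {t : ℕ} (htm : t < m) {c : ℝ} (hct : c ≤ B (t + 1))
    (hΛ : AntitoneOn (firstLeftLimit m B q) (Set.Icc (m - t + 1) t))
    {i j : ℕ} (hj : j ∈ Set.Icc (m - t) t) (hi : i ∈ Set.Icc 1 m)
    {x : ℝ} (hxc : x ∈ Set.Icc (-c) c) (hxj : x ∈ Set.Icc (B j) (B (j + 1))) :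
    min (firstLeftLimit m B q t) (outProb m B q t c 1) ≤ outProb m B q j x i := by
  obtain ⟨hj, hjt⟩ := hj
  obtain ⟨hi, him⟩ := hi
  rcases le_or_gt i j with hij | hji
  · exact min_le_outProb_of_le hB hq htm hct hΛ hj hjt hi hij (h2 j i hi hij (by omega))
      hxc.2 hxj.2
  · have hx_neg : -x ≤ B (m - j + 1) := by
      rw [← Nat.sub_add_comm (by omega : j ≤ m), ← neg_le_neg_iff, neg_neg,
        ← hsym j (by omega) (by omega)]
      exact hxj.1
    rw [← outProb_reflect hsym hji him]
    exact min_le_outProb_of_le hB hq htm hct hΛ (by omega) (by omega) (by omega) (by omega)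
      (h2 _ _ (by omega) (by omega) (by omega)) (neg_le.mp hxc.1) hx_neg

theorem output_prob_min_bound_general (hB : StrictMonoOn B (Set.Icc 1 m))
    (hsym : ∀ i : ℕ, 1 ≤ i → i ≤ m → B i = -B (m + 1 - i))
    {t : ℕ} (ht : 1 ≤ t) (htm : t < m) {c : ℝ} (hc : c ∈ Set.Ico (B t) (B (t + 1)))
    (hq : ∀ n i : ℕ, 1 ≤ i → i ≤ n → n ≤ m → 0 ≤ q n i)
    (h1 : ∀ k : ℕ, m - t < k → k < t → q k 1 ≤ q (k - 1) 1)
    (h2 : ∀ j i : ℕ, 1 ≤ i → i ≤ j → j < m → q j 1 ≤ q j i)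
    (h3 : ∀ k r : ℕ, m - t < k → k < t → k + 2 ≤ r → r ≤ m →
      q (m - k) (m - r + 1) * (B r - B (k + 1)) ≤ q (m - k + 1) (m - r + 1) * (B r - B k)) :
    ∀ x ∈ Set.Icc (-c) c, ∀ i ∈ Finset.Icc 1 m,
      min (firstLeftLimit m B q t) (pFun m B q c 1) ≤ pFun m B q x i := by
  intro x hx i hi
  have hmono := hB.monotoneOn
  have hΛ : AntitoneOn (firstLeftLimit m B q) (Set.Icc (m - t + 1) t) :=
    antitoneOn_firstLeftLimit hmono hq (by omega) htm.le h1 h3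
  have hidx_c : binIdx m B c = t := by
    simpa using binIdx_mem_Icc hmono ht le_rfl htm hc
  have hleft : B (m - t) ≤ x := by
    have hsym_t := hsym (m - t) (by omega) (by omega)
    rw [(by omega : m + 1 - (m - t) = t + 1)] at hsym_t
    linarith [hx.1, hc.2]
  have hright : x < B (t + 1) := hx.2.trans_lt hc.2
  have hle : m - t ≤ t := by
    by_contra! hlt
    exact (hleft.trans_lt hright).not_ge (hmono ⟨by omega, by omega⟩ ⟨by omega, by omega⟩ hlt)
  have hx_range : x ∈ Set.Ico (B 1) (B m) :=
    ⟨(hmono ⟨le_rfl, by omega⟩ ⟨by omega, by omega⟩ (by omega)).trans hleft,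
      hright.trans_le (hmono ⟨by omega, by omega⟩ ⟨by omega, le_rfl⟩ (by omega))⟩
  rw [pFun, pFun, hidx_c]
  exact min_le_outProb hB hsym hq h2 htm hc.2.le hΛ
    (binIdx_mem_Icc hmono (by omega) hle htm ⟨hleft, hright⟩) (Finset.mem_Icc.mp hi) hx
    (Set.Ico_subset_Icc_self (mem_Ico_binIdx hmono (by omega) hx_range))

lemma add_eq_add_one_of_bracket (hB : MonotoneOn B (Set.Icc 1 m))
    (hsym : ∀ i : ℕ, 1 ≤ i → i ≤ m → B i = -B (m + 1 - i))
    {c : ℝ} {s t : ℕ} (hs : 2 ≤ s) (hsm : s ≤ m) (ht : 1 ≤ t) (htm : t < m)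
    (hcs : -c ∈ Set.Ioo (B (s - 1)) (B s)) (hct : c ∈ Set.Ioo (B t) (B (t + 1))) :
    s + t = m + 1 := by
  have hsym_s := hsym s (by omega) hsm
  have hsym_pred := hsym (s - 1) (by omega) (by omega)
  have hlt : m + 1 - s < t + 1 := hB.reflect_lt ⟨by omega, by omega⟩ ⟨by omega, htm⟩
    (by linarith [hcs.2, hct.2])
  have hgt : t < m + 1 - (s - 1) := hB.reflect_lt ⟨ht, htm.le⟩ ⟨by omega, by omega⟩
    (by linarith [hcs.1, hct.1])
  omega

end

/-- (Lower bound on output probabilities under the linear constraints of Theorem 6)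
Under constraints (i) `q_j(i) ≥ q_{j+1}(i)`, (ii) `q_j(i) ≤ q_j(i+1)`, and (iii)
`q_{m−k+1}(m−r+1)(B r − B k) ≥ q_{m−k}(m−r+1)(B r − B (k+1))` for `s ≤ k ≤ t`, `k+2 ≤ r ≤ m`,
with `Λ = q_{t−1}(1) Σ_{r=t+1}^m q_{m−t+1}(m−r+1)(B r − B t)/(B r − B 1)` (the left limit of
`p(·,1)` at `B t`), we have `p(x,i) ≥ min(Λ, p(c,1))` for all `x ∈ [−c,c]`, `i ∈ {1,…,m}`. -/
theorem output_prob_min_bound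
    (m : ℕ) (hm : 4 ≤ m)
    (B : ℕ → ℝ)
    (hB : ∀ i j : ℕ, 1 ≤ i → i < j → j ≤ m → B i < B j)
    (hsym : ∀ i : ℕ, 1 ≤ i → i ≤ m → B i = -B (m + 1 - i))
    (c : ℝ) (hc : 0 < c)
    (s t : ℕ) (hs2 : 2 ≤ s) (hst : s ≤ t) (ht : t ≤ m - 1)
    (hs_lt : B (s - 1) < -c) (hs_gt : -c < B s)
    (ht_lt : B t < c) (ht_gt : c < B (t + 1))
    (q : ℕ → ℕ → ℝ)
    (hq_nonneg : ∀ n i : ℕ, 1 ≤ n → n ≤ m → 0 ≤ q n i)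
    (hq_sum : ∀ n : ℕ, 1 ≤ n → n ≤ m → ∑ i ∈ Finset.Icc 1 n, q n i = 1)
    (h1 : ∀ i j : ℕ, 1 ≤ i → i ≤ j → j ≤ m - 1 → q (j + 1) i ≤ q j i)
    (h2 : ∀ i j : ℕ, 1 ≤ i → i < j → j ≤ m → q j i ≤ q j (i + 1))
    (h3 : ∀ k r : ℕ, s ≤ k → k ≤ t → k + 2 ≤ r → r ≤ m →
      q (m - k) (m - r + 1) * (B r - B (k + 1)) ≤ q (m - k + 1) (m - r + 1) * (B r - B k)) :
    ∀ x ∈ Set.Icc (-c) c, ∀ i ∈ Finset.Icc 1 m,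
      min (q (t - 1) 1 * ∑ r ∈ Finset.Icc (t + 1) m,
            q (m - t + 1) (m - r + 1) * ((B r - B t) / (B r - B 1)))
          (pFun m B q c 1)
        ≤ pFun m B q x i := by
  have hB' : StrictMonoOn B (Set.Icc 1 m) := fun i hi j hj hij => hB i j hi.1 hij hj.2
  have hst' : s + t = m + 1 := add_eq_add_one_of_bracket hB'.monotoneOn hsym hs2 (by omega)
    (by omega) (by omega) ⟨hs_lt, hs_gt⟩ ⟨ht_lt, ht_gt⟩
  have hq_first (k : ℕ) (hk : m - t < k) (hkt : k < t) : q k 1 ≤ q (k - 1) 1 := by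
    simpa [Nat.sub_add_cancel (by omega : 1 ≤ k)] using h1 1 (k - 1) le_rfl (by omega) (by omega)
  have hq_mono (j : ℕ) (hj : j < m) : MonotoneOn (q j) (Set.Icc 1 j) :=
    monotoneOn_of_le_add_one Set.ordConnected_Icc fun i _ hi hi' => h2 i j hi.1 hi'.2 hj.le
  exact output_prob_min_bound_general hB' hsym (by omega) (by omega) ⟨ht_lt.le, ht_gt⟩
    (fun n i hi hin hnm => hq_nonneg n i (hi.trans hin) hnm) hq_first
    (fun j i hi hij hj => hq_mono j hj ⟨le_rfl, hi.trans hij⟩ ⟨hi, hij⟩ hi)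
    (fun k r hk hkt => h3 k r (by omega) hkt.le)
end
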